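/- Let α ∈ [1/2,1), ε ∈ [0,1], and let ρ_AB, σ_AB be classical-quantum states (system A classical for both) or quantum-classical states (system B classical for both) with (1/2)‖ρ_AB - σ_AB‖₁ ≤ ε. Then |H̃_α^↑(A|B)_σ - H̃_α^↑(A|B)_ρ| ≤ log(1+ε) + (1/(1-α)) log(1 + ε^α d_A^{1-α} - ε/(d_A(1+ε))^{1-α}). -/

import Mathlib

open Matrix MeasureTheory
open scoped Kronecker ComplexOrder

noncomputable def mpow {n : Type*} [Fintype n] [DecidableEq n]
    (A : Matrix n n ℂ) (p : ℝ) : Matrix n n ℂ :=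
  if hA : A.IsHermitian then
    (hA.eigenvectorUnitary : Matrix n n ℂ) *
      Matrix.diagonal (fun i => ((hA.eigenvalues i ^ p : ℝ) : ℂ)) *
      (star (hA.eigenvectorUnitary : Matrix n n ℂ))
  else 0

noncomputable def traceNorm {n : Type*} [Fintype n] [DecidableEq n]
    (A : Matrix n n ℂ) : ℝ :=
  (mpow (Aᴴ * A) (1/2)).trace.re

def IsDensity {n : Type*} [Fintype n] [DecidableEq n] (ρ : Matrix n n ℂ) : Prop :=
  ρ.PosSemidef ∧ ρ.trace = 1

noncomputable def sandTr {a b : Type*} [Fintype a] [DecidableEq a] [Fintype b] [DecidableEq b]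
    (α : ℝ) (ρ : Matrix (a × b) (a × b) ℂ) (η : Matrix b b ℂ) : ℝ :=
  (mpow (((1 : Matrix a a ℂ) ⊗ₖ mpow η ((1 - α)/(2*α))) * ρ *
      ((1 : Matrix a a ℂ) ⊗ₖ mpow η ((1 - α)/(2*α)))) α).trace.re

noncomputable def Hcond {a b : Type*} [Fintype a] [DecidableEq a] [Fintype b] [DecidableEq b]
    (α : ℝ) (ρ : Matrix (a × b) (a × b) ℂ) : ℝ :=
  ⨆ η : {η : Matrix b b ℂ // IsDensity η}, (1/(1-α)) * Real.logb 2 (sandTr α ρ η)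

/-- `ρ_AB` is classical on `A` (block diagonal in the standard basis of `A`),
i.e. of the form `Σ_a p(a) |a⟩⟨a| ⊗ ρ_B^a`. -/
def ClassicalA {a b : Type*} (ρ : Matrix (a × b) (a × b) ℂ) : Prop :=
  ∀ p q : a × b, p.1 ≠ q.1 → ρ p q = 0

/-- `ρ_AB` is classical on `B`. -/
def ClassicalB {a b : Type*} (ρ : Matrix (a × b) (a × b) ℂ) : Prop :=
  ∀ p q : a × b, p.2 ≠ q.2 → ρ p q = 0


open scoped MatrixOrder Matrix.Norms.L2Operator

set_option linter.unusedSectionVars false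

section Basics
variable {n : Type*} [Fintype n] [DecidableEq n]

lemma contSpec (A : Matrix n n ℂ) (f : ℝ → ℝ) : ContinuousOn f (spectrum ℝ A) := by
  have : (spectrum ℝ A).Finite := Matrix.finite_real_spectrum
  rw [continuousOn_iff_continuous_domRestrict]
  fun_prop

lemma mpow_eq_cfc {A : Matrix n n ℂ} (hA : A.IsHermitian) (p : ℝ) :
    mpow A p = cfc (fun x : ℝ => x ^ p) A := by
  rw [hA.cfc_eq, mpow, dif_pos hA]
  rfl

lemma mpow_eq_rpow {A : Matrix n n ℂ} (hA : A.PosSemidef) (p : ℝ) :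
    mpow A p = CFC.rpow A p := by
  rw [mpow_eq_cfc hA.isHermitian]
  exact (CFC.rpow_eq_cfc_real (Matrix.nonneg_iff_posSemidef.mpr hA)).symm

lemma spec_nonneg {A : Matrix n n ℂ} (hA : A.PosSemidef) {x : ℝ} (hx : x ∈ spectrum ℝ A) :
    0 ≤ x :=
  spectrum_nonneg_of_nonneg (Matrix.nonneg_iff_posSemidef.mpr hA) hx

lemma spec_pos {A : Matrix n n ℂ} (hA : A.PosDef) {x : ℝ} (hx : x ∈ spectrum ℝ A) :
    0 < x := by
  have := (Matrix.isStrictlyPositive_iff_posDef.mpr hA)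
  exact this.spectrum_pos (𝕜 := ℝ) hx

lemma mpow_posSemidef {A : Matrix n n ℂ} (hA : A.PosSemidef) (p : ℝ) :
    (mpow A p).PosSemidef := by
  rw [mpow_eq_rpow hA]
  exact Matrix.nonneg_iff_posSemidef.mp CFC.rpow_nonneg

lemma mpow_posDef {A : Matrix n n ℂ} (hA : A.PosDef) (p : ℝ) :
    (mpow A p).PosDef := by
  rw [mpow_eq_rpow hA.posSemidef]
  exact Matrix.isStrictlyPositive_iff_posDef.mp
    (IsStrictlyPositive.rpow A p (Matrix.isStrictlyPositive_iff_posDef.mpr hA))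

lemma mpow_herm {A : Matrix n n ℂ} (hA : A.PosSemidef) (p : ℝ) :
    (mpow A p)ᴴ = mpow A p := (mpow_posSemidef hA p).isHermitian

lemma mpow_add {A : Matrix n n ℂ} (hA : A.PosSemidef) {a b : ℝ} (ha : 0 ≤ a) (hb : 0 ≤ b) :
    mpow A a * mpow A b = mpow A (a + b) := by
  rw [mpow_eq_cfc hA.isHermitian, mpow_eq_cfc hA.isHermitian, mpow_eq_cfc hA.isHermitian,
    ← cfc_mul _ _ _ (contSpec _ _) (contSpec _ _)]
  apply cfc_congr
  intro x hx
  exact (Real.rpow_add_of_nonneg (spec_nonneg hA hx) ha hb).symm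

lemma mpow_add' {A : Matrix n n ℂ} (hA : A.PosDef) (a b : ℝ) :
    mpow A a * mpow A b = mpow A (a + b) := by
  rw [mpow_eq_cfc hA.isHermitian, mpow_eq_cfc hA.isHermitian, mpow_eq_cfc hA.isHermitian,
    ← cfc_mul _ _ _ (contSpec _ _) (contSpec _ _)]
  apply cfc_congr
  intro x hx
  exact (Real.rpow_add (spec_pos hA hx) _ _).symm

lemma mpow_one {A : Matrix n n ℂ} (hA : A.PosSemidef) : mpow A 1 = A := by
  rw [mpow_eq_cfc hA.isHermitian]
  simp only [Real.rpow_one]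
  exact cfc_id' ℝ A hA.isHermitian.isSelfAdjoint

lemma mpow_zero {A : Matrix n n ℂ} (hA : A.PosSemidef) : mpow A 0 = 1 := by
  rw [mpow_eq_cfc hA.isHermitian]
  simp only [Real.rpow_zero]
  exact cfc_const_one ℝ A hA.isHermitian.isSelfAdjoint

lemma mpow_mpow {A : Matrix n n ℂ} (hA : A.PosSemidef) (a b : ℝ) :
    mpow (mpow A a) b = mpow A (a * b) := by
  rw [mpow_eq_cfc (mpow_posSemidef hA a).isHermitian, mpow_eq_cfc hA.isHermitian,
    mpow_eq_cfc hA.isHermitian, ← cfc_comp' _ _ _ ?_ (contSpec _ _) hA.isHermitian.isSelfAdjoint]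
  · apply cfc_congr
    intro x hx
    exact (Real.rpow_mul (spec_nonneg hA hx) _ _).symm
  · apply Set.Finite.continuousOn
    exact Set.Finite.image _ Matrix.finite_real_spectrum

lemma mpow_trace {A : Matrix n n ℂ} (hA : A.IsHermitian) (p : ℝ) :
    (mpow A p).trace = ((∑ i, hA.eigenvalues i ^ p : ℝ) : ℂ) := by
  rw [mpow, dif_pos hA, Matrix.trace_mul_comm, ← mul_assoc]
  simp [Matrix.trace]

lemma mpow_trace_re {A : Matrix n n ℂ} (hA : A.IsHermitian) (p : ℝ) :
    (mpow A p).trace.re = ∑ i, hA.eigenvalues i ^ p := by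
  rw [mpow_trace hA, Complex.ofReal_re]

lemma tr_mono {A B : Matrix n n ℂ} (h : A ≤ B) : A.trace.re ≤ B.trace.re := by
  have := (Matrix.le_iff.mp h).trace_nonneg
  rw [Matrix.trace_sub] at this
  have := (Complex.le_def.mp this).1
  simp at this
  linarith

lemma tr_nonneg {A : Matrix n n ℂ} (h : A.PosSemidef) : 0 ≤ A.trace.re := by
  simpa using tr_mono (Matrix.nonneg_iff_posSemidef.mpr h)

lemma mpow_mono {A B : Matrix n n ℂ} (hA : A.PosSemidef) (h : A ≤ B) {p : ℝ} (hp : 0 ≤ p)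
    (hp1 : p ≤ 1) : mpow A p ≤ mpow B p := by
  have hB : B.PosSemidef := Matrix.nonneg_iff_posSemidef.mp
    ((Matrix.nonneg_iff_posSemidef.mpr hA).trans h)
  rw [mpow_eq_rpow hA, mpow_eq_rpow hB]
  exact CFC.rpow_le_rpow ⟨hp, hp1⟩ h

/-- `tr (X Xᴴ)^p = tr (Xᴴ X)^p`. -/
lemma tr_mpow_comm (X : Matrix n n ℂ) (p : ℝ) :
    (mpow (X * Xᴴ) p).trace = (mpow (Xᴴ * X) p).trace := by
  have h1 : (X * Xᴴ).IsHermitian := Matrix.isHermitian_mul_conjTranspose_self X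
  have h2 : (Xᴴ * X).IsHermitian := Matrix.isHermitian_conjTranspose_mul_self X
  rw [mpow_trace h1, mpow_trace h2]
  congr 1
  have e1 := h1.roots_charpoly_eq_eigenvalues
  have e2 := h2.roots_charpoly_eq_eigenvalues
  rw [Matrix.charpoly_mul_comm, e2] at e1
  have e3 := congrArg (fun s => (s.map (fun z : ℂ => z.re ^ p)).sum) e1
  simpa using e3.symm

lemma mpow_smul {A : Matrix n n ℂ} (hA : A.PosSemidef) {c : ℝ} (hc : 0 ≤ c) (p : ℝ) :
    mpow (c • A) p = (c ^ p) • mpow A p := by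
  have hcA : (c • A).IsHermitian := by
    have := hA.isHermitian
    unfold Matrix.IsHermitian at *
    rw [Matrix.conjTranspose_smul, this]; simp
  rw [mpow_eq_cfc hcA, mpow_eq_cfc hA.isHermitian]
  rw [← cfc_comp_smul c _ A ?_ hA.isHermitian.isSelfAdjoint, ← cfc_smul _ _ _ (contSpec _ _)]
  · apply cfc_congr
    intro x hx
    simp [Real.mul_rpow hc (spec_nonneg hA hx)]
  · apply Set.Finite.continuousOn
    exact Set.Finite.image _ Matrix.finite_real_spectrum

lemma mpow_smul_psd {A : Matrix n n ℂ} (hA : A.PosSemidef) {c : ℝ} (hc : 0 ≤ c) :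
    (c • A).PosSemidef := by
  have := hA.smul (α := ℂ) (a := (c:ℂ)) (by simpa using hc)
  simpa using this

lemma one_kron_mpow {m : Type*} [Fintype m] [DecidableEq m] {A : Matrix m m ℂ}
    (hA : A.PosSemidef) (p : ℝ) :
    mpow ((1 : Matrix n n ℂ) ⊗ₖ A) p = (1 : Matrix n n ℂ) ⊗ₖ mpow A p := by
  let φ : Matrix m m ℂ →⋆ₐ[ℝ] Matrix (n × m) (n × m) ℂ :=
    { toFun := fun B => (1 : Matrix n n ℂ) ⊗ₖ B
      map_one' := by simp
      map_mul' := fun a b => by rw [← Matrix.mul_kronecker_mul]; simp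
      map_zero' := by simp
      map_add' := fun a b => by simp [Matrix.kronecker_add]
      commutes' := fun r => by
        rw [Algebra.algebraMap_eq_smul_one, Algebra.algebraMap_eq_smul_one,
          Matrix.kronecker_smul, Matrix.one_kronecker_one]
      map_star' := fun a => by
        simp [Matrix.star_eq_conjTranspose, Matrix.conjTranspose_kronecker] }
  have hφ : Continuous φ := (φ.toLinearMap).continuous_of_finiteDimensional
  have hφA : (φ A).PosSemidef := Matrix.PosSemidef.one.kronecker hA
  have := StarAlgHomClass.map_cfc (R := ℝ) φ (fun x => x ^ p) A (contSpec _ _) hφ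
    hA.isHermitian.isSelfAdjoint hφA.isHermitian.isSelfAdjoint
  rw [← mpow_eq_cfc hA.isHermitian, ← mpow_eq_cfc hφA.isHermitian] at this
  exact this.symm

end Basics

section Young
variable {n : Type*} [Fintype n] [DecidableEq n]

lemma weights {A B : Matrix n n ℂ} (hA : A.IsHermitian) (hB : B.IsHermitian) :
    ∃ w : n → n → ℝ, (∀ i j, 0 ≤ w i j) ∧ ∀ a b : ℝ, (mpow A a * mpow B b).trace.re =
      ∑ i, ∑ j, w i j * (hA.eigenvalues i ^ a * hB.eigenvalues j ^ b) := by
  set U : Matrix n n ℂ := (hA.eigenvectorUnitary : Matrix n n ℂ) with hU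
  set V : Matrix n n ℂ := (hB.eigenvectorUnitary : Matrix n n ℂ) with hV
  set W := star U * V with hW
  refine ⟨fun i j => Complex.normSq (W i j), fun i j => Complex.normSq_nonneg _, fun a b => ?_⟩
  rw [mpow, dif_pos hA, mpow, dif_pos hB]
  set D := Matrix.diagonal (fun i => ((hA.eigenvalues i ^ a : ℝ) : ℂ))
  set E := Matrix.diagonal (fun i => ((hB.eigenvalues i ^ b : ℝ) : ℂ))
  have h1 : (U * D * star U * (V * E * star V)).trace = (D * (W * E * Wᴴ)).trace := by
    rw [Matrix.mul_assoc, Matrix.mul_assoc, Matrix.trace_mul_comm]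
    rw [hW, Matrix.conjTranspose_mul]
    simp only [Matrix.star_eq_conjTranspose, Matrix.conjTranspose_conjTranspose, Matrix.mul_assoc]
  rw [h1]
  simp only [Matrix.trace, Matrix.diag_apply, D, E, Matrix.diagonal_mul]
  rw [Complex.re_sum]
  refine Finset.sum_congr rfl fun i _ => ?_
  rw [Matrix.mul_apply, Finset.mul_sum, Complex.re_sum]
  refine Finset.sum_congr rfl fun j _ => ?_
  rw [Complex.normSq_apply, Matrix.mul_diagonal, Matrix.conjTranspose_apply]
  simp
  ring

lemma young1 {Z B : Matrix n n ℂ} (hZ : Z.PosSemidef) (hB : B.PosDef) {α : ℝ} (h0 : 0 < α)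
    (h1 : α < 1) :
    (mpow Z α).trace.re ≤ α * (Z * B).trace.re + (1 - α) * (mpow B (-(α / (1 - α)))).trace.re := by
  obtain ⟨w, hw, h⟩ := weights hZ.isHermitian hB.isHermitian
  have e1 := h α 0
  have e2 := h 1 1
  have e3 := h 0 (-(α / (1 - α)))
  rw [mpow_zero hB.posSemidef, mul_one] at e1
  rw [mpow_one hB.posSemidef, mpow_one hZ] at e2
  rw [mpow_zero hZ, one_mul] at e3
  rw [e1, e2, e3, Finset.mul_sum, Finset.mul_sum, ← Finset.sum_add_distrib]
  refine Finset.sum_le_sum fun i _ => ?_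
  rw [Finset.mul_sum, Finset.mul_sum, ← Finset.sum_add_distrib]
  refine Finset.sum_le_sum fun j _ => ?_
  have hz := hZ.eigenvalues_nonneg i
  have hb := hB.eigenvalues_pos j
  set z := hZ.isHermitian.eigenvalues i
  set b := hB.isHermitian.eigenvalues j
  have h1' : 0 < 1 - α := by linarith
  have key := Real.geom_mean_le_arith_mean2_weighted h0.le h1'.le
    (mul_nonneg hz hb.le) (Real.rpow_nonneg hb.le (-(α / (1 - α)))) (by ring)
  rw [Real.mul_rpow hz hb.le, ← Real.rpow_mul hb.le, mul_assoc, ← Real.rpow_add hb] at key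
  have e : α + -(α / (1 - α)) * (1 - α) = 0 := by field_simp; ring
  rw [e] at key
  simp only [Real.rpow_zero, Real.rpow_one, mul_one, one_mul] at key ⊢
  nlinarith [mul_le_mul_of_nonneg_left key (hw i j)]

lemma young2 {D Z : Matrix n n ℂ} (hD : D.PosSemidef) (hZ : Z.PosSemidef) {p : ℝ} (h0 : 0 < p)
    (h1 : p ≤ 1) :
    (D * mpow Z (1 - p)).trace.re ≤ p * (mpow D p⁻¹).trace.re + (1 - p) * Z.trace.re := by
  obtain ⟨w, hw, h⟩ := weights hD.isHermitian hZ.isHermitian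
  have e1 := h 1 (1 - p)
  have e2 := h p⁻¹ 0
  have e3 := h 0 1
  rw [mpow_one hD] at e1
  rw [mpow_zero hZ, mul_one] at e2
  rw [mpow_zero hD, one_mul, mpow_one hZ] at e3
  rw [e1, e2, e3, Finset.mul_sum, Finset.mul_sum, ← Finset.sum_add_distrib]
  refine Finset.sum_le_sum fun i _ => ?_
  rw [Finset.mul_sum, Finset.mul_sum, ← Finset.sum_add_distrib]
  refine Finset.sum_le_sum fun j _ => ?_
  have hd := hD.eigenvalues_nonneg i
  have hz := hZ.eigenvalues_nonneg j
  set d := hD.isHermitian.eigenvalues i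
  set z := hZ.isHermitian.eigenvalues j
  have h1' : 0 ≤ 1 - p := by linarith
  have key := Real.geom_mean_le_arith_mean2_weighted h0.le h1'
    (Real.rpow_nonneg hd p⁻¹) hz (by ring)
  rw [← Real.rpow_mul hd, inv_mul_cancel₀ h0.ne'] at key
  simp only [Real.rpow_zero, Real.rpow_one, mul_one, one_mul] at key ⊢
  nlinarith [mul_le_mul_of_nonneg_left key (hw i j)]

lemma tr_mul_nonneg {P X : Matrix n n ℂ} (hP : P.PosSemidef) (hX : X.PosSemidef) :
    0 ≤ (P * X).trace.re := by
  have h : X = mpow X (1/2) * mpow X (1/2) := by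
    rw [mpow_add hX (by norm_num) (by norm_num)]; norm_num [mpow_one hX]
  have h2 := hP.mul_mul_conjTranspose_same (mpow X (1/2))
  rw [mpow_herm hX] at h2
  have h3 : (P * X).trace = (mpow X (1/2) * P * mpow X (1/2)).trace := by
    conv_lhs => rw [h]
    rw [← Matrix.mul_assoc, Matrix.trace_mul_comm, Matrix.mul_assoc]
  rw [h3]
  exact tr_nonneg h2

lemma tr_mul_mono {M N X : Matrix n n ℂ} (h : M ≤ N) (hX : X.PosSemidef) :
    (M * X).trace.re ≤ (N * X).trace.re := by
  have := tr_mul_nonneg (Matrix.le_iff.mp h) hX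
  rw [Matrix.sub_mul, Matrix.trace_sub, Complex.sub_re] at this
  linarith

lemma mpow_neg_anti {X W : Matrix n n ℂ} (hX : X.PosDef) (h : X ≤ W) {p : ℝ} (hp : 0 ≤ p)
    (hp1 : p ≤ 1) : mpow W (-p) ≤ mpow X (-p) := by
  have hW : W.PosDef := by
    have := Matrix.PosDef.add_posSemidef hX (Matrix.le_iff.mp h)
    simpa using this
  have h1 := mpow_mono hX.posSemidef h hp hp1
  have h2 := CStarAlgebra.rpow_neg_one_le_rpow_neg_one h1
    (Matrix.isStrictlyPositive_iff_posDef.mpr (mpow_posDef hX p))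
  have e1 : mpow W p ^ (-1:ℝ) = mpow W (-p) := by
    have := mpow_eq_rpow (mpow_posSemidef hW.posSemidef p) (-1)
    rw [mpow_mpow hW.posSemidef] at this
    simpa using this.symm
  have e2 : mpow X p ^ (-1:ℝ) = mpow X (-p) := by
    have := mpow_eq_rpow (mpow_posSemidef hX.posSemidef p) (-1)
    rw [mpow_mpow hX.posSemidef] at this
    simpa using this.symm
  rwa [e1, e2] at h2

lemma rotfeld_pd {X Y : Matrix n n ℂ} (hX : X.PosDef) (hY : Y.PosDef) {α : ℝ} (h0 : 0 < α)
    (h1 : α < 1) :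
    (mpow (X + Y) α).trace.re ≤ (mpow X α).trace.re + (mpow Y α).trace.re := by
  have hW : (X + Y).PosDef := hX.add hY
  have e : ∀ {T : Matrix n n ℂ}, T.PosDef → mpow T (-(1 - α)) * T = mpow T α := by
    intro T hT
    conv_lhs => rw [← mpow_one hT.posSemidef, mpow_mpow hT.posSemidef, mpow_add' hT]
    congr 1; ring
  have eW : (mpow (X + Y) α).trace.re = (mpow (X+Y) (-(1 - α)) * X).trace.re +
      (mpow (X+Y) (-(1 - α)) * Y).trace.re := by
    rw [← Complex.add_re, ← Matrix.trace_add, ← Matrix.mul_add, e hW]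
  rw [eW, ← e hX, ← e hY]
  refine add_le_add (tr_mul_mono (mpow_neg_anti hX ?_ (by linarith) (by linarith)) hX.posSemidef)
    (tr_mul_mono (mpow_neg_anti hY ?_ (by linarith) (by linarith)) hY.posSemidef)
  · rw [Matrix.le_iff]; simpa using hY.posSemidef
  · rw [Matrix.le_iff]; simpa using hX.posSemidef

lemma psd_add_eps {X : Matrix n n ℂ} (hX : X.PosSemidef) {δ : ℝ} (hδ : 0 < δ) :
    (X + δ • (1 : Matrix n n ℂ)).PosDef := by
  refine Matrix.PosDef.posSemidef_add hX ?_
  have := (Matrix.PosDef.one (n := n) (R := ℂ)).smul (α := ℂ) (a := (δ:ℂ)) (by simpa using hδ)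
  simpa using this

lemma tr_mpow_add_eps {X : Matrix n n ℂ} (hX : X.PosSemidef) {δ α : ℝ} (hδ : 0 < δ)
    (h0 : 0 < α) (h1 : α < 1) :
    (mpow (X + δ • (1 : Matrix n n ℂ)) α).trace.re ≤
      (mpow X α).trace.re + Fintype.card n * δ ^ α := by
  have hXd := psd_add_eps hX hδ
  have e : X + δ • (1 : Matrix n n ℂ) = cfc (fun x : ℝ => x + δ) X := by
    rw [cfc_add_const δ (fun x => x) X (contSpec _ _) hX.isHermitian.isSelfAdjoint,
      cfc_id' ℝ X hX.isHermitian.isSelfAdjoint, Algebra.algebraMap_eq_smul_one]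
  have e2 : mpow (X + δ • (1 : Matrix n n ℂ)) α = cfc (fun x : ℝ => (x + δ) ^ α) X := by
    rw [mpow_eq_cfc hXd.isHermitian, e,
      ← cfc_comp' _ _ _ ?_ (contSpec _ _) hX.isHermitian.isSelfAdjoint]
    exact (Set.Finite.image _ Matrix.finite_real_spectrum).continuousOn _
  have e3 : cfc (fun x : ℝ => (x + δ) ^ α) X ≤ cfc (fun x : ℝ => x ^ α + δ ^ α) X := by
    apply cfc_mono _ (contSpec _ _) (contSpec _ _)
    intro x hx
    exact Real.rpow_add_le_add_rpow (spec_nonneg hX hx) hδ.le h0.le h1.le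
  have e4 : cfc (fun x : ℝ => x ^ α + δ ^ α) X = mpow X α + (δ ^ α) • (1 : Matrix n n ℂ) := by
    rw [cfc_add_const _ _ X (contSpec _ _) hX.isHermitian.isSelfAdjoint,
      mpow_eq_cfc hX.isHermitian, Algebra.algebraMap_eq_smul_one]
  rw [← e2, e4] at e3
  refine (tr_mono e3).trans (le_of_eq ?_)
  simp [Matrix.trace_add, Matrix.trace_smul, mul_comm]

lemma rotfeld {X Y : Matrix n n ℂ} (hX : X.PosSemidef) (hY : Y.PosSemidef) {α : ℝ} (h0 : 0 < α)
    (h1 : α < 1) :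
    (mpow (X + Y) α).trace.re ≤ (mpow X α).trace.re + (mpow Y α).trace.re := by
  have key : ∀ δ : ℝ, 0 < δ → (mpow (X + Y) α).trace.re ≤
      (mpow X α).trace.re + (mpow Y α).trace.re + 2 * (Fintype.card n * δ ^ α) := by
    intro δ hδ
    have a1 : (mpow (X + Y) α).trace.re ≤
        (mpow ((X + δ • (1 : Matrix n n ℂ)) + (Y + δ • (1 : Matrix n n ℂ))) α).trace.re := by
      apply tr_mono
      apply mpow_mono (hX.add hY) _ h0.le h1.le
      rw [Matrix.le_iff]
      have : X + δ • (1 : Matrix n n ℂ) + (Y + δ • 1) - (X + Y) = (δ + δ) • 1 := by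
        rw [add_smul]; abel
      rw [this]
      exact mpow_smul_psd Matrix.PosSemidef.one (by linarith)
    have a2 := rotfeld_pd (psd_add_eps hX hδ) (psd_add_eps hY hδ) h0 h1
    have a3 := tr_mpow_add_eps hX hδ h0 h1
    have a4 := tr_mpow_add_eps hY hδ h0 h1
    linarith
  have lim : Filter.Tendsto (fun δ : ℝ => (mpow X α).trace.re + (mpow Y α).trace.re +
      2 * (Fintype.card n * δ ^ α)) (nhdsWithin 0 (Set.Ioi 0))
      (nhds ((mpow X α).trace.re + (mpow Y α).trace.re + 2 * (Fintype.card n * (0:ℝ) ^ α))) := by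
    apply Filter.Tendsto.mono_left _ nhdsWithin_le_nhds
    have : ContinuousAt (fun δ : ℝ => δ ^ α) 0 := Real.continuousAt_rpow_const _ _ (Or.inr h0.le)
    exact ((this.tendsto.const_mul _).const_mul _).const_add _
  rw [Real.zero_rpow h0.ne'] at lim
  simp only [mul_zero, add_zero] at lim
  exact ge_of_tendsto lim (by filter_upwards [self_mem_nhdsWithin] with δ hδ using key δ hδ)

end Young

section Lieb
variable {n m : Type*} [Fintype n] [DecidableEq n] [Fintype m] [DecidableEq m]

lemma kr_mul {A : Matrix n n ℂ} {Z : Matrix m m ℂ} (hA : A.PosDef) (hZ : Z.PosDef)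
    (a b c d : ℝ) :
    (mpow Z a ⊗ₖ mpow A b) * (mpow Z c ⊗ₖ mpow A d) = mpow Z (a + c) ⊗ₖ mpow A (b + d) := by
  rw [← Matrix.mul_kronecker_mul, mpow_add' hA, mpow_add' hZ]

lemma kr_posDef {A : Matrix n n ℂ} {Z : Matrix m m ℂ} (hA : A.PosDef) (hZ : Z.PosDef)
    (a b : ℝ) : (mpow Z a ⊗ₖ mpow A b).PosDef :=
  (mpow_posDef hZ a).kronecker (mpow_posDef hA b)

lemma kr_inv {A : Matrix n n ℂ} {Z : Matrix m m ℂ} (hA : A.PosDef) (hZ : Z.PosDef)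
    (a b : ℝ) : (mpow Z a ⊗ₖ mpow A b)⁻¹ = mpow Z (-a) ⊗ₖ mpow A (-b) := by
  apply Matrix.inv_eq_right_inv
  rw [kr_mul hA hZ]
  simp [mpow_zero hA.posSemidef, mpow_zero hZ.posSemidef]

lemma conj_mono {k : Type*} [Fintype k] {X Y : Matrix k k ℂ} (h : X ≤ Y) (C : Matrix k k ℂ) :
    C * X * Cᴴ ≤ C * Y * Cᴴ := by
  rw [Matrix.le_iff] at *
  have := h.mul_mul_conjTranspose_same C
  rwa [Matrix.mul_sub, Matrix.sub_mul] at this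

lemma gm_block {A : Matrix n n ℂ} {Z : Matrix m m ℂ} (hA : A.PosDef) (hZ : Z.PosDef)
    (a b : ℝ) :
    (Matrix.fromBlocks (mpow Z (1 - a) ⊗ₖ mpow A a) (mpow Z (1 - (a+b)/2) ⊗ₖ mpow A ((a+b)/2))
      (mpow Z (1 - (a+b)/2) ⊗ₖ mpow A ((a+b)/2)) (mpow Z (1 - b) ⊗ₖ mpow A b)).PosSemidef := by
  have hD := kr_posDef hA hZ (1 - b) b
  have hT := (kr_posDef hA hZ (1 - (a+b)/2) ((a+b)/2)).isHermitian
  haveI := hD.isUnit.invertible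
  have := (Matrix.PosDef.fromBlocks₂₂ (mpow Z (1 - a) ⊗ₖ mpow A a)
    (mpow Z (1 - (a+b)/2) ⊗ₖ mpow A ((a+b)/2)) hD)
  rw [hT.eq] at this
  rw [this, kr_inv hA hZ, kr_mul hA hZ, kr_mul hA hZ]
  have e : mpow Z (1 - (a + b) / 2 + -(1 - b) + (1 - (a + b) / 2)) ⊗ₖ
      mpow A ((a + b) / 2 + -b + (a + b) / 2) = mpow Z (1 - a) ⊗ₖ mpow A a := by
    congr 2 <;> ring
  rw [e, sub_self]
  exact Matrix.PosSemidef.zero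

lemma blockdiag_psd {k : Type*} [Fintype k] [DecidableEq k] {X Y : Matrix k k ℂ}
    (hX : X.PosSemidef) (hY : Y.PosSemidef) :
    (Matrix.fromBlocks X 0 0 Y).PosSemidef := by
  have h1 := hX.conjTranspose_mul_mul_same (Matrix.fromCols (1 : Matrix k k ℂ) (0 : Matrix k k ℂ))
  have h2 := hY.conjTranspose_mul_mul_same (Matrix.fromCols (0 : Matrix k k ℂ) (1 : Matrix k k ℂ))
  have := h1.add h2
  convert this using 1
  simp only [Matrix.conjTranspose_fromCols_eq_fromRows_conjTranspose, Matrix.fromRows_mul,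
    Matrix.fromRows_mul_fromCols, Matrix.fromBlocks_add]
  simp
  try (ext (i | i) (j | j) <;> simp)

lemma gm_upper {A : Matrix n n ℂ} {Z : Matrix m m ℂ} (hA : A.PosDef) (hZ : Z.PosDef)
    (a b : ℝ) (T : Matrix (m × n) (m × n) ℂ) (hT : T.PosSemidef)
    (h : (Matrix.fromBlocks (mpow Z (1 - a) ⊗ₖ mpow A a) T T (mpow Z (1 - b) ⊗ₖ mpow A b)).PosSemidef) :
    T ≤ mpow Z (1 - (a+b)/2) ⊗ₖ mpow A ((a+b)/2) := by
  have hD := kr_posDef hA hZ (1 - b) b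
  haveI := hD.isUnit.invertible
  have hs := (Matrix.PosDef.fromBlocks₂₂ (mpow Z (1 - a) ⊗ₖ mpow A a) T hD)
  rw [hT.isHermitian.eq] at hs
  have h1 : T * (mpow Z (1 - b) ⊗ₖ mpow A b)⁻¹ * T ≤ mpow Z (1 - a) ⊗ₖ mpow A a :=
    Matrix.le_iff.mpr (hs.mp h)
  rw [kr_inv hA hZ] at h1
  set F := mpow Z (-(1 - b)/2) ⊗ₖ mpow A (-b/2) with hF
  set F' := mpow Z ((1 - b)/2) ⊗ₖ mpow A (b/2) with hF'
  have hFh : Fᴴ = F := (kr_posDef hA hZ _ _).isHermitian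
  have hFh' : F'ᴴ = F' := (kr_posDef hA hZ _ _).isHermitian
  have hFF : F * F = mpow Z (-(1 - b)) ⊗ₖ mpow A (-b) := by
    rw [hF, kr_mul hA hZ]; congr 2 <;> ring
  have hFi : F' * F = 1 := by
    rw [hF, hF', kr_mul hA hZ]
    have e1 : (1 - b)/2 + -(1 - b)/2 = 0 := by ring
    have e2 : b/2 + -b/2 = 0 := by ring
    rw [e1, e2, mpow_zero hA.posSemidef, mpow_zero hZ.posSemidef, Matrix.one_kronecker_one]
  have hFi' : F * F' = 1 := by
    rw [hF, hF', kr_mul hA hZ]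
    have e1 : -(1 - b)/2 + (1 - b)/2 = 0 := by ring
    have e2 : -b/2 + b/2 = 0 := by ring
    rw [e1, e2, mpow_zero hA.posSemidef, mpow_zero hZ.posSemidef, Matrix.one_kronecker_one]
  set Y := F * T * F with hY
  have hYp : Y.PosSemidef := by
    have := hT.mul_mul_conjTranspose_same F
    rwa [hFh] at this
  set S := mpow Z ((b - a)/2) ⊗ₖ mpow A ((a - b)/2) with hS
  have hSp : S.PosSemidef := (kr_posDef hA hZ _ _).posSemidef
  have h2 : Y * Y ≤ S * S := by
    have := conj_mono h1 F
    rw [hFh, ← hFF] at this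
    have e1 : F * (T * (F * F) * T) * F = Y * Y := by
      simp only [hY, Matrix.mul_assoc]
    have e2 : F * (mpow Z (1 - a) ⊗ₖ mpow A a) * F = S * S := by
      rw [hF, hS, kr_mul hA hZ, kr_mul hA hZ, kr_mul hA hZ]; congr 2 <;> ring
    rwa [e1, e2] at this
  have sq : ∀ {X : Matrix (m × n) (m × n) ℂ}, X.PosSemidef → mpow (X * X) (1/2) = X := by
    intro X hX
    have : X * X = mpow X (1 + 1) := by
      rw [← mpow_add hX zero_le_one zero_le_one, mpow_one hX]
    rw [this, mpow_mpow hX]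
    norm_num [mpow_one hX]
  have hYY : (Y * Y).PosSemidef := by
    have := Matrix.posSemidef_conjTranspose_mul_self Y
    rwa [hYp.isHermitian.eq] at this
  have h3 := mpow_mono hYY h2 (p := 1/2) (by norm_num) (by norm_num)
  rw [sq hYp, sq hSp] at h3
  have h4 := conj_mono h3 F'
  rw [hFh'] at h4
  have e1 : F' * Y * F' = T := by
    have : F' * Y * F' = (F' * F) * T * (F * F') := by simp only [hY, Matrix.mul_assoc]
    rw [this, hFi, hFi', Matrix.one_mul, Matrix.mul_one]
  have e2 : F' * S * F' = mpow Z (1 - (a+b)/2) ⊗ₖ mpow A ((a+b)/2) := by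
    rw [hF', hS, kr_mul hA hZ, kr_mul hA hZ]; congr 2 <;> ring
  rwa [e1, e2] at h4

lemma mpow_continuous {A : Matrix n n ℂ} (hA : A.PosDef) : Continuous (fun p : ℝ => mpow A p) := by
  simp only [mpow, dif_pos hA.isHermitian]
  have : Continuous (fun p : ℝ => Matrix.diagonal
      (fun i => ((hA.isHermitian.eigenvalues i ^ p : ℝ) : ℂ))) := by
    refine Continuous.matrix_diagonal ?_
    refine continuous_pi fun i => ?_
    exact Complex.continuous_ofReal.comp (Real.continuous_const_rpow (hA.eigenvalues_pos i).ne')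
  exact (continuous_const.matrix_mul this).matrix_mul continuous_const

lemma kr_continuous {A : Matrix n n ℂ} {Z : Matrix m m ℂ} (hA : A.PosDef) (hZ : Z.PosDef) :
    Continuous (fun p : ℝ => mpow Z (1 - p) ⊗ₖ mpow A p) := by
  have h1 := mpow_continuous hA
  have h2 := (mpow_continuous hZ).comp (continuous_const.sub continuous_id : Continuous fun p : ℝ => 1 - p)
  refine continuous_matrix fun i j => ?_
  simp only [Matrix.kroneckerMap_apply]
  exact (h2.matrix_elem _ _).mul (h1.matrix_elem _ _)

lemma midpoint_closed {S : Set ℝ} (hc : IsClosed S) (h0 : (0:ℝ) ∈ S) (h1 : (1:ℝ) ∈ S)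
    (hm : ∀ a ∈ S, ∀ b ∈ S, (a + b)/2 ∈ S) {p : ℝ} (hp0 : 0 ≤ p) (hp1 : p ≤ 1) : p ∈ S := by
  by_contra hp
  obtain ⟨a, ⟨ha1, ha2⟩, ha3⟩ := ((isCompact_Icc (a := (0:ℝ)) (b := p)).inter_left hc).exists_isGreatest
    ⟨0, h0, le_rfl, hp0⟩
  obtain ⟨b, ⟨hb1, hb2⟩, hb3⟩ := ((isCompact_Icc (a := p) (b := (1:ℝ))).inter_left hc).exists_isLeast
    ⟨1, h1, hp1, le_rfl⟩
  have hap : a < p := lt_of_le_of_ne ha2.2 (fun h => hp (h ▸ ha1))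
  have hbp : p < b := lt_of_le_of_ne hb2.1 (fun h => hp (h ▸ hb1))
  have hmm := hm a ha1 b hb1
  rcases le_total ((a+b)/2) p with h | h
  · have := ha3 ⟨hmm, by linarith [ha2.1], h⟩
    linarith
  · have := hb3 ⟨hmm, h, by linarith [hb2.2]⟩
    linarith

lemma ando {A₁ A₂ : Matrix n n ℂ} {Z₁ Z₂ : Matrix m m ℂ} (hA₁ : A₁.PosDef) (hA₂ : A₂.PosDef)
    (hZ₁ : Z₁.PosDef) (hZ₂ : Z₂.PosDef) {p : ℝ} (hp0 : 0 ≤ p) (hp1 : p ≤ 1) :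
    mpow Z₁ (1 - p) ⊗ₖ mpow A₁ p + mpow Z₂ (1 - p) ⊗ₖ mpow A₂ p ≤
      mpow (Z₁ + Z₂) (1 - p) ⊗ₖ mpow (A₁ + A₂) p := by
  have hA := hA₁.add hA₂
  have hZ := hZ₁.add hZ₂
  let S : Set ℝ := {p | mpow Z₁ (1 - p) ⊗ₖ mpow A₁ p + mpow Z₂ (1 - p) ⊗ₖ mpow A₂ p ≤
      mpow (Z₁ + Z₂) (1 - p) ⊗ₖ mpow (A₁ + A₂) p}
  have hS : IsClosed S := isClosed_le ((kr_continuous hA₁ hZ₁).add (kr_continuous hA₂ hZ₂))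
    (kr_continuous hA hZ)
  refine midpoint_closed hS ?_ ?_ ?_ hp0 hp1
  · simp only [S, Set.mem_ofPred_eq, sub_zero, mpow_zero hA.posSemidef, mpow_zero hA₁.posSemidef,
      mpow_zero hA₂.posSemidef, mpow_one hZ.posSemidef, mpow_one hZ₁.posSemidef,
      mpow_one hZ₂.posSemidef, Matrix.add_kronecker, le_refl]
  · simp only [S, Set.mem_ofPred_eq, sub_self, mpow_zero hZ.posSemidef, mpow_zero hZ₁.posSemidef,
      mpow_zero hZ₂.posSemidef, mpow_one hA.posSemidef, mpow_one hA₁.posSemidef,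
      mpow_one hA₂.posSemidef, Matrix.kronecker_add, le_refl]
  · intro a ha b hb
    simp only [S, Set.mem_ofPred_eq] at ha hb ⊢
    apply gm_upper hA hZ a b
    · exact ((kr_posDef hA₁ hZ₁ _ _).add (kr_posDef hA₂ hZ₂ _ _)).posSemidef
    · have h1 := (gm_block hA₁ hZ₁ a b).add (gm_block hA₂ hZ₂ a b)
      have h2 := h1.add (blockdiag_psd (Matrix.le_iff.mp ha) (Matrix.le_iff.mp hb))
      simpa [Matrix.fromBlocks_add] using h2

lemma mpow_transpose {Z : Matrix n n ℂ} (hZ : Z.PosSemidef) (p : ℝ) :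
    mpow Zᵀ p = (mpow Z p)ᵀ := by
  let φ : Matrix n n ℂ →⋆ₐ[ℝ] Matrix n n ℂ :=
    { toFun := fun B => B.map (starRingEnd ℂ)
      map_one' := by simp
      map_mul' := fun a b => by simp [Matrix.map_mul]
      map_zero' := by simp
      map_add' := fun a b => by ext; simp
      commutes' := fun r => by
        ext i j
        by_cases h : i = j <;> simp [Matrix.algebraMap_matrix_apply, h]
      map_star' := fun a => by ext; simp [Matrix.star_eq_conjTranspose] }
  have hφ : Continuous φ := (φ.toLinearMap).continuous_of_finiteDimensional
  have e : ∀ {T : Matrix n n ℂ}, T.IsHermitian → φ T = Tᵀ := by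
    intro T hT
    ext i j
    have := congrFun (congrFun hT.eq j) i
    simp only [Matrix.conjTranspose_apply] at this
    simpa [φ] using this
  have hφA : (φ Z).PosSemidef := by rw [e hZ.isHermitian]; exact hZ.transpose
  have := StarAlgHomClass.map_cfc (R := ℝ) φ (fun x => x ^ p) Z (contSpec _ _) hφ
    hZ.isHermitian.isSelfAdjoint hφA.isHermitian.isSelfAdjoint
  rw [← mpow_eq_cfc hZ.isHermitian, ← mpow_eq_cfc hφA.isHermitian, e hZ.isHermitian,
    e (mpow_posSemidef hZ p).isHermitian] at this
  exact this.symm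

lemma lieb {A₁ A₂ Z₁ Z₂ : Matrix n n ℂ} (hA₁ : A₁.PosDef) (hA₂ : A₂.PosDef)
    (hZ₁ : Z₁.PosDef) (hZ₂ : Z₂.PosDef) (K : Matrix n n ℂ) {p : ℝ} (hp0 : 0 ≤ p) (hp1 : p ≤ 1) :
    (Kᴴ * mpow A₁ p * K * mpow Z₁ (1 - p)).trace.re + (Kᴴ * mpow A₂ p * K * mpow Z₂ (1 - p)).trace.re
      ≤ (Kᴴ * mpow (A₁ + A₂) p * K * mpow (Z₁ + Z₂) (1 - p)).trace.re := by
  have h := Matrix.le_iff.mp (ando hA₁ hA₂ hZ₁.transpose hZ₂.transpose hp0 hp1)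
  rw [← Matrix.transpose_add, mpow_transpose hZ₁.posSemidef, mpow_transpose hZ₂.posSemidef,
    mpow_transpose (hZ₁.add hZ₂).posSemidef] at h
  have h2 := h.dotProduct_mulVec_nonneg (Matrix.vec K)
  simp only [Matrix.sub_mulVec, Matrix.add_mulVec, Matrix.kronecker_mulVec_vec,
    Matrix.transpose_transpose, dotProduct_sub, dotProduct_add,
    Matrix.star_vec_dotProduct_vec] at h2
  have h3 := (Complex.le_def.mp h2).1
  simp only [Complex.sub_re, Complex.add_re, Complex.zero_re, ← Matrix.mul_assoc] at h3
  linarith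

end Lieb

section Q
variable {n : Type*} [Fintype n] [DecidableEq n]

lemma conj_pd {C X : Matrix n n ℂ} (hC : C.PosDef) (hX : X.PosDef) : (C * X * C).PosDef := by
  have h := hX.conjTranspose_mul_mul_same (B := C)
    (Matrix.mulVec_injective_of_isUnit hC.isUnit)
  rwa [hC.isHermitian.eq] at h

lemma conj_psd {C X : Matrix n n ℂ} (hC : C.PosSemidef) (hX : X.PosSemidef) :
    (C * X * C).PosSemidef := by
  have h := hX.conjTranspose_mul_mul_same C
  rwa [hC.isHermitian.eq] at h

lemma swap_tr {A X : Matrix n n ℂ} (hA : A.PosSemidef) (hX : X.PosSemidef) {s : ℝ} (hs : 0 ≤ s)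
    (r : ℝ) : (mpow (mpow A s * X * mpow A s) r).trace.re =
      (mpow (mpow X (1/2) * mpow A (2 * s) * mpow X (1/2)) r).trace.re := by
  have h := tr_mpow_comm (mpow A s * mpow X (1/2)) r
  rw [Matrix.conjTranspose_mul, mpow_herm hA, mpow_herm hX] at h
  have e1 : mpow A s * mpow X (1/2) * (mpow X (1/2) * mpow A s) = mpow A s * X * mpow A s := by
    calc _ = mpow A s * (mpow X (1/2) * mpow X (1/2)) * mpow A s := by simp only [Matrix.mul_assoc, Matrix.mul_one, Matrix.one_mul]
      _ = _ := by rw [mpow_add hX (by norm_num) (by norm_num)]; norm_num [mpow_one hX]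
  have e2 : mpow X (1/2) * mpow A s * (mpow A s * mpow X (1/2)) =
      mpow X (1/2) * mpow A (2 * s) * mpow X (1/2) := by
    calc _ = mpow X (1/2) * (mpow A s * mpow A s) * mpow X (1/2) := by simp only [Matrix.mul_assoc, Matrix.mul_one, Matrix.one_mul]
      _ = _ := by rw [mpow_add hA hs hs, two_mul]
  rw [e1, e2] at h
  rw [h]

lemma epstein {A₁ A₂ G : Matrix n n ℂ} (hA₁ : A₁.PosDef) (hA₂ : A₂.PosDef) (hG : G.PosDef)
    {s : ℝ} (hs : 0 < s) (hs1 : 2 * s ≤ 1) :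
    (mpow (mpow A₁ s * G * mpow A₁ s) (2*s)⁻¹).trace.re +
    (mpow (mpow A₂ s * G * mpow A₂ s) (2*s)⁻¹).trace.re ≤
    (mpow (mpow (A₁ + A₂) s * G * mpow (A₁ + A₂) s) (2*s)⁻¹).trace.re := by
  have hA := hA₁.add hA₂
  rw [swap_tr hA₁.posSemidef hG.posSemidef hs.le, swap_tr hA₂.posSemidef hG.posSemidef hs.le,
    swap_tr hA.posSemidef hG.posSemidef hs.le]
  set p := 2 * s with hp
  have hp0 : 0 < p := by positivity
  set K := mpow G (1/2) with hK
  have hKp : K.PosDef := mpow_posDef hG _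
  have hD : ∀ A : Matrix n n ℂ, A.PosDef → (K * mpow A p * K).PosDef := fun A h =>
    conj_pd hKp (mpow_posDef h p)
  have key : ∀ A : Matrix n n ℂ, A.PosDef →
      (K * mpow A p * K * mpow (mpow (K * mpow A p * K) p⁻¹) (1 - p)) =
        mpow (K * mpow A p * K) p⁻¹ := fun A h => by
    rw [mpow_mpow (hD A h).posSemidef]
    nth_rw 1 [← mpow_one (hD A h).posSemidef]
    rw [mpow_add' (hD A h)]
    congr 1
    field_simp
    ring
  have hl := lieb hA₁ hA₂ (mpow_posDef (hD _ hA₁) p⁻¹) (mpow_posDef (hD _ hA₂) p⁻¹) K hp0.le hs1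
  have hy := young2 (hD _ hA).posSemidef
    ((mpow_posDef (hD _ hA₁) p⁻¹).add (mpow_posDef (hD _ hA₂) p⁻¹)).posSemidef hp0 hs1
  rw [hKp.isHermitian.eq, key _ hA₁, key _ hA₂] at hl
  have := hl.trans hy
  rw [Matrix.trace_add, Complex.add_re] at this
  have h2 : p * ((mpow (K * mpow A₁ p * K) p⁻¹).trace.re + (mpow (K * mpow A₂ p * K) p⁻¹).trace.re)
     ≤ p * (mpow (K * mpow (A₁ + A₂) p * K) p⁻¹).trace.re := by linarith
  exact le_of_mul_le_mul_left h2 hp0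

/-- The sandwiched trace functional. -/
noncomputable def qf (α : ℝ) (X A : Matrix n n ℂ) : ℝ :=
  (mpow (mpow A ((1 - α)/(2*α)) * X * mpow A ((1 - α)/(2*α))) α).trace.re

lemma mpow_neg_of_mul {B C : Matrix n n ℂ} (hB : B.PosDef) (h : B * C = 1) (r : ℝ) :
    mpow B (-r) = mpow C r := by
  have h1 : mpow B (-1) = C := by
    have h2 : mpow B (-1) * B = 1 := by
      nth_rw 2 [← mpow_one hB.posSemidef]
      rw [mpow_add' hB]; norm_num [mpow_zero hB.posSemidef]
    calc mpow B (-1) = mpow B (-1) * (B * C) := by rw [h, mul_one]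
      _ = C := by rw [← mul_assoc, h2, one_mul]
  rw [← h1, mpow_mpow hB.posSemidef]
  congr 1; ring

lemma mpow_cancel {A : Matrix n n ℂ} (hA : A.PosDef) (s : ℝ) : mpow A s * mpow A (-s) = 1 := by
  rw [mpow_add' hA, add_neg_cancel, mpow_zero hA.posSemidef]

lemma mpow_cancel' {A : Matrix n n ℂ} (hA : A.PosDef) (s : ℝ) : mpow A (-s) * mpow A s = 1 := by
  rw [mpow_add' hA, neg_add_cancel, mpow_zero hA.posSemidef]

lemma q_young {A X H G : Matrix n n ℂ} (hA : A.PosDef) (hX : X.PosSemidef) (hH : H.PosDef)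
    (hHG : H * G = 1) {α : ℝ} (h0 : 0 < α) (h1 : α < 1) :
    qf α X A ≤ α * (H * X).trace.re + (1 - α) *
      (mpow (mpow A ((1 - α)/(2*α)) * G * mpow A ((1 - α)/(2*α))) (2 * ((1 - α)/(2*α)))⁻¹).trace.re := by
  unfold qf
  set s := (1 - α)/(2*α) with hs
  have hB : (mpow A (-s) * H * mpow A (-s)).PosDef := conj_pd (mpow_posDef hA _) hH
  have hy := young1 (conj_psd (mpow_posDef hA s).posSemidef hX) hB h0 h1
  have e1 : (mpow A s * X * mpow A s * (mpow A (-s) * H * mpow A (-s))).trace = (H * X).trace := by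
    calc _ = (mpow A s * X * (mpow A s * mpow A (-s)) * H * mpow A (-s)).trace := by
            refine congrArg Matrix.trace ?_; simp only [Matrix.mul_assoc, Matrix.mul_one, Matrix.one_mul]
      _ = (mpow A s * (X * H * mpow A (-s))).trace := by
            rw [mpow_cancel hA]; refine congrArg Matrix.trace ?_; simp only [Matrix.mul_assoc, Matrix.mul_one, Matrix.one_mul]
      _ = (X * H * (mpow A (-s) * mpow A s)).trace := by
            rw [Matrix.trace_mul_comm]; refine congrArg Matrix.trace ?_; simp only [Matrix.mul_assoc, Matrix.mul_one, Matrix.one_mul]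
      _ = _ := by rw [mpow_cancel' hA, mul_one, Matrix.trace_mul_comm]
  have e2 : (mpow A (-s) * H * mpow A (-s)) * (mpow A s * G * mpow A s) = 1 := by
    calc _ = mpow A (-s) * H * (mpow A (-s) * mpow A s) * G * mpow A s := by simp only [Matrix.mul_assoc, Matrix.mul_one, Matrix.one_mul]
      _ = mpow A (-s) * (H * G) * mpow A s := by rw [mpow_cancel' hA]; simp only [Matrix.mul_assoc, Matrix.mul_one, Matrix.one_mul]
      _ = 1 := by rw [hHG, mul_one, mpow_cancel' hA]
  rw [e1, mpow_neg_of_mul hB e2] at hy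
  convert hy using 6
  rw [hs]; field_simp

set_option maxHeartbeats 1000000 in
lemma q_superadd {A₁ A₂ X₁ X₂ : Matrix n n ℂ} (hA₁ : A₁.PosDef) (hA₂ : A₂.PosDef)
    (hX₁ : X₁.PosDef) (hX₂ : X₂.PosDef) {α : ℝ} (h0 : 1/2 ≤ α) (h1 : α < 1) :
    qf α X₁ A₁ + qf α X₂ A₂ ≤ qf α (X₁ + X₂) (A₁ + A₂) := by
  have hα : 0 < α := by linarith
  have hA := hA₁.add hA₂
  have hX := hX₁.add hX₂
  set s := (1 - α)/(2*α) with hs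
  have hs0 : 0 < s := by rw [hs]; apply div_pos <;> linarith
  have hs1 : 2 * s ≤ 1 := by
    rw [hs, show 2 * ((1 - α)/(2*α)) = (1 - α)/α by field_simp, div_le_one hα]; linarith
  set A := A₁ + A₂ with hAdef
  set X := X₁ + X₂ with hXdef
  set Z := mpow A s * X * mpow A s with hZdef
  have hZ : Z.PosDef := conj_pd (mpow_posDef hA _) hX
  set H := mpow A s * mpow Z (α - 1) * mpow A s with hHdef
  set G := mpow A (-s) * mpow Z (1 - α) * mpow A (-s) with hGdef
  have hH : H.PosDef := conj_pd (mpow_posDef hA _) (mpow_posDef hZ _)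
  have hG : G.PosDef := conj_pd (mpow_posDef hA _) (mpow_posDef hZ _)
  have hHG : H * G = 1 := by
    calc H * G = mpow A s * mpow Z (α - 1) * (mpow A s * mpow A (-s)) * mpow Z (1 - α) * mpow A (-s) := by
          rw [hHdef, hGdef]; simp only [Matrix.mul_assoc, Matrix.mul_one, Matrix.one_mul]
      _ = mpow A s * (mpow Z (α - 1) * mpow Z (1 - α)) * mpow A (-s) := by
          rw [mpow_cancel hA]; simp only [Matrix.mul_assoc, Matrix.mul_one, Matrix.one_mul]
      _ = 1 := by
          rw [mpow_add' hZ]; norm_num [mpow_zero hZ.posSemidef, mpow_cancel hA]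
  have hAG : mpow A s * G * mpow A s = mpow Z (1 - α) := by
    calc _ = (mpow A s * mpow A (-s)) * mpow Z (1 - α) * (mpow A (-s) * mpow A s) := by
          rw [hGdef]; simp only [Matrix.mul_assoc, Matrix.mul_one, Matrix.one_mul]
      _ = _ := by rw [mpow_cancel hA, mpow_cancel' hA]; simp only [Matrix.mul_assoc, Matrix.mul_one, Matrix.one_mul]
  have hHX : (H * X).trace = (mpow Z α).trace := by
    calc _ = (mpow A s * (mpow Z (α - 1) * mpow A s * X)).trace := by
          rw [hHdef]; refine congrArg Matrix.trace ?_; simp only [Matrix.mul_assoc, Matrix.mul_one, Matrix.one_mul]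
      _ = (mpow Z (α - 1) * Z).trace := by
          rw [Matrix.trace_mul_comm, hZdef]; refine congrArg Matrix.trace ?_; simp only [Matrix.mul_assoc, Matrix.mul_one, Matrix.one_mul]
      _ = (mpow Z α).trace := by
          nth_rw 2 [← mpow_one hZ.posSemidef]
          rw [mpow_add' hZ]; norm_num
  have y1 := q_young hA₁ hX₁.posSemidef hH hHG hα h1
  have y2 := q_young hA₂ hX₂.posSemidef hH hHG hα h1
  have he := epstein hA₁ hA₂ hG hs0 hs1
  rw [← hs] at y1 y2
  rw [← hAdef, hAG, mpow_mpow hZ.posSemidef,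
    show (1 - α) * (2 * s)⁻¹ = α by
      have : (1 - α) ≠ 0 := by linarith
      rw [hs]; field_simp] at he
  have hsum : (H * X₁).trace.re + (H * X₂).trace.re = (mpow Z α).trace.re := by
    rw [← hHX, hXdef, mul_add, Matrix.trace_add, Complex.add_re]
  have hq : qf α X A = (mpow Z α).trace.re := rfl
  rw [hq]
  have h1' : 0 < 1 - α := by linarith
  have he' := mul_le_mul_of_nonneg_left he h1'.le
  have : α * ((H * X₁).trace.re + (H * X₂).trace.re) = α * (mpow Z α).trace.re := by rw [hsum]
  linarith

lemma s_nonneg {α : ℝ} (h0 : 0 < α) (h1 : α < 1) : 0 ≤ (1 - α)/(2*α) := by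
  apply div_nonneg <;> linarith

lemma two_s {α : ℝ} (h0 : 0 < α) : 2 * ((1 - α)/(2*α)) = (1 - α)/α := by field_simp

lemma q_nonneg {A X : Matrix n n ℂ} (hA : A.PosSemidef) (hX : X.PosSemidef) (α : ℝ) :
    0 ≤ qf α X A :=
  tr_nonneg (mpow_posSemidef (conj_psd (mpow_posSemidef hA _) hX) _)

lemma q_mono_X {A X Y : Matrix n n ℂ} (hA : A.PosSemidef) (hX : X.PosSemidef) (h : X ≤ Y)
    {α : ℝ} (h0 : 0 < α) (h1 : α < 1) : qf α X A ≤ qf α Y A := by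
  apply tr_mono
  apply mpow_mono (conj_psd (mpow_posSemidef hA _) hX) _ h0.le h1.le
  have := conj_mono h (mpow A ((1 - α)/(2*α)))
  rwa [mpow_herm hA] at this

lemma psd_of_le {X Y : Matrix n n ℂ} (hX : X.PosSemidef) (h : X ≤ Y) : Y.PosSemidef :=
  Matrix.nonneg_iff_posSemidef.mp ((Matrix.nonneg_iff_posSemidef.mpr hX).trans h)

lemma q_mono_A {A B X : Matrix n n ℂ} (hA : A.PosSemidef) (hX : X.PosSemidef) (h : A ≤ B)
    {α : ℝ} (h0 : 1/2 ≤ α) (h1 : α < 1) : qf α X A ≤ qf α X B := by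
  have hα : 0 < α := by linarith
  unfold qf
  rw [swap_tr hA hX (s_nonneg hα h1), swap_tr (psd_of_le hA h) hX (s_nonneg hα h1), two_s hα]
  apply tr_mono
  apply mpow_mono (conj_psd (mpow_posSemidef hX _) (mpow_posSemidef hA _)) _ hα.le h1.le
  have := conj_mono (mpow_mono hA h (p := (1-α)/α) (div_nonneg (by linarith) hα.le)
    ((div_le_one hα).mpr (by linarith))) (mpow X (1/2))
  rwa [mpow_herm hX] at this

lemma q_subadd {A X Y : Matrix n n ℂ} (hA : A.PosSemidef) (hX : X.PosSemidef) (hY : Y.PosSemidef)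
    {α : ℝ} (h0 : 0 < α) (h1 : α < 1) : qf α (X + Y) A ≤ qf α X A + qf α Y A := by
  have := rotfeld (conj_psd (mpow_posSemidef hA ((1 - α)/(2*α))) hX)
    (conj_psd (mpow_posSemidef hA ((1 - α)/(2*α))) hY) h0 h1
  unfold qf
  rwa [mul_add, add_mul]

lemma q_smul_A {A X : Matrix n n ℂ} (hA : A.PosSemidef) (hX : X.PosSemidef) {c : ℝ} (hc : 0 ≤ c)
    {α : ℝ} (h0 : 0 < α) : qf α X (c • A) = c ^ (1 - α) * qf α X A := by
  unfold qf
  set s := (1 - α)/(2*α) with hs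
  rw [mpow_smul hA hc]
  have hcs : 0 ≤ c ^ s := Real.rpow_nonneg hc _
  have e : (c ^ s) • mpow A s * X * (c ^ s) • mpow A s
      = (c ^ s * c ^ s) • (mpow A s * X * mpow A s) := by
    simp [smul_smul]
  rw [e, mpow_smul (conj_psd (mpow_posSemidef hA _) hX) (mul_nonneg hcs hcs), Matrix.trace_smul,
    Complex.smul_re, smul_eq_mul]
  congr 1
  rw [Real.mul_rpow hcs hcs, ← Real.rpow_mul hc]
  have : s * α = (1 - α)/2 := by rw [hs]; field_simp
  rw [this]
  rcases hc.eq_or_lt with rfl | hc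
  · by_cases h : α = 1
    · simp [h]
    · have : 1 - α ≠ 0 := fun h' => h (by linarith)
      rw [Real.zero_rpow (by positivity), Real.zero_rpow this]; simp
  · rw [← Real.rpow_add hc]; congr 1; ring

end Q

section R
variable {n : Type*} [Fintype n] [DecidableEq n]

lemma lim0 {f : ℝ → ℝ} (hf : Continuous f) {c : ℝ} (h : ∀ δ, 0 < δ → c ≤ f δ) : c ≤ f 0 := by
  have ht : Filter.Tendsto f (nhdsWithin 0 (Set.Ioi 0)) (nhds (f 0)) :=
    (hf.tendsto 0).mono_left nhdsWithin_le_nhds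
  refine ge_of_tendsto ht ?_
  filter_upwards [self_mem_nhdsWithin] with δ hδ using h δ hδ

lemma q_upper_pd {A X : Matrix n n ℂ} (hA : A.PosDef) (hX : X.PosSemidef) {α x a : ℝ}
    (h0 : 0 < α) (h1 : α < 1) (hx : 0 < x) (hxX : X.trace.re ≤ x) (ha : 0 < a)
    (haA : A.trace.re ≤ a) : qf α X A ≤ x ^ α * a ^ (1 - α) := by
  set l : ℝ := (a / x) ^ (1 - α) with hl
  have hl0 : 0 < l := by positivity
  have hH : (l • (1 : Matrix n n ℂ)).PosDef := by
    have := psd_add_eps (Matrix.PosSemidef.zero (n := n) (R := ℂ)) hl0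
    rwa [zero_add] at this
  have hHG : (l • (1 : Matrix n n ℂ)) * (l⁻¹ • (1 : Matrix n n ℂ)) = 1 := by
    simp [smul_smul, hl0.ne']
  have h := q_young hA hX hH hHG h0 h1
  set s := (1 - α)/(2*α) with hs
  have hs0 : 0 < s := by rw [hs]; apply div_pos <;> linarith
  have e1 : mpow A s * (l⁻¹ • (1 : Matrix n n ℂ)) * mpow A s = l⁻¹ • mpow A (2 * s) := by
    simp [mpow_add' hA, two_mul]
  rw [e1, mpow_smul (mpow_posSemidef hA.posSemidef _) (by positivity), mpow_mpow hA.posSemidef,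
    mul_inv_cancel₀ (by positivity), mpow_one hA.posSemidef] at h
  simp only [Matrix.smul_mul, Matrix.one_mul, Matrix.trace_smul, Complex.smul_re, smul_eq_mul] at h
  have h1' : 0 < 1 - α := by linarith
  have e2 : l * x = x ^ α * a ^ (1 - α) := by
    rw [hl, Real.div_rpow ha.le hx.le]
    have : x = x ^ α * x ^ (1 - α) := by rw [← Real.rpow_add hx]; simp
    have hp : 0 < x ^ (1 - α) := by positivity
    field_simp
    nth_rw 1 [this]
    ring
  have e3 : l⁻¹ ^ (2 * s)⁻¹ * a = x ^ α * a ^ (1 - α) := by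
    have e : l⁻¹ ^ (2 * s)⁻¹ = (x / a) ^ α := by
      rw [hl, ← Real.inv_rpow (by positivity), inv_div, ← Real.rpow_mul (by positivity)]
      congr 1
      rw [hs]; field_simp
    rw [e, Real.div_rpow hx.le ha.le]
    have : a = a ^ α * a ^ (1 - α) := by rw [← Real.rpow_add ha]; simp
    have hp : 0 < a ^ α := by positivity
    field_simp
    nth_rw 1 [this]
  have m1 : α * (l * X.trace.re) ≤ α * (l * x) := by gcongr
  have m2 : (1 - α) * (l⁻¹ ^ (2 * s)⁻¹ * A.trace.re) ≤ (1 - α) * (l⁻¹ ^ (2 * s)⁻¹ * a) := by gcongr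
  rw [e2] at m1
  rw [e3] at m2
  linarith

lemma le_add_eps (A : Matrix n n ℂ) {δ : ℝ} (hδ : 0 ≤ δ) : A ≤ A + δ • (1 : Matrix n n ℂ) := by
  rw [Matrix.le_iff, add_sub_cancel_left]
  exact mpow_smul_psd Matrix.PosSemidef.one hδ

lemma tr_add_eps (A : Matrix n n ℂ) (δ : ℝ) :
    (A + δ • (1 : Matrix n n ℂ)).trace.re = A.trace.re + δ * Fintype.card n := by
  simp [Matrix.trace_add]

lemma q_upper {A X : Matrix n n ℂ} (hA : A.PosSemidef) (hX : X.PosSemidef) {α : ℝ}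
    (h0 : 1/2 ≤ α) (h1 : α < 1) : qf α X A ≤ X.trace.re ^ α * A.trace.re ^ (1 - α) := by
  have hα : 0 < α := by linarith
  have key : ∀ δ : ℝ, 0 < δ → qf α X A ≤
      (X.trace.re + δ) ^ α * (A.trace.re + δ * Fintype.card n + δ) ^ (1 - α) := by
    intro δ hδ
    have hx := tr_nonneg hX
    have ha := tr_nonneg hA
    refine (q_mono_A hA hX (le_add_eps A hδ.le) h0 h1).trans ?_
    apply q_upper_pd (psd_add_eps hA hδ) hX hα h1 (by positivity) (by linarith) (by positivity)
    rw [tr_add_eps]; linarith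
  have := lim0 (f := fun δ => (X.trace.re + δ) ^ α *
    (A.trace.re + δ * Fintype.card n + δ) ^ (1 - α)) (by
      apply Continuous.mul
      · exact Continuous.rpow_const (by fun_prop) (fun _ => Or.inr hα.le)
      · exact Continuous.rpow_const (by fun_prop) (fun _ => Or.inr (by linarith))) key
  simpa using this

lemma q_lower {A X : Matrix n n ℂ} (hX : X.PosSemidef) (h : X ≤ A) {α : ℝ}
    (h0 : 1/2 ≤ α) (h1 : α < 1) : X.trace.re ≤ qf α X A := by
  have hα : 0 < α := by linarith
  refine le_trans (le_of_eq ?_) (q_mono_A hX hX h h0 h1)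
  unfold qf
  set s := (1 - α)/(2*α) with hs
  have hs0 : 0 ≤ s := s_nonneg hα h1
  have e : mpow X s * X * mpow X s = mpow X (s + 1 + s) := by
    nth_rw 2 [← mpow_one hX]
    rw [mpow_add hX hs0 zero_le_one, mpow_add hX (by positivity) hs0]
  rw [e, mpow_mpow hX, show (s + 1 + s) * α = 1 by rw [hs]; field_simp; ring, mpow_one hX]

/-- Generalized block-diagonality. -/
def Cl {γ : Type*} (g : n → γ) (M : Matrix n n ℂ) : Prop := ∀ p q, g p ≠ g q → M p q = 0

lemma cl_iff {γ : Type*} [DecidableEq γ] (g : n → γ) (M : Matrix n n ℂ) :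
    Cl g M ↔ ∀ x, Commute M (Matrix.diagonal (fun p => if g p = x then (1:ℂ) else 0)) := by
  constructor
  · intro h x
    ext p q
    rw [Matrix.diagonal_mul, Matrix.mul_diagonal]
    by_cases hpq : g p = g q
    · rw [hpq, mul_comm]
    · simp [h p q hpq]
  · intro h p q hpq
    have := congrFun (congrFun (h (g p)).eq p) q
    rw [Matrix.diagonal_mul, Matrix.mul_diagonal] at this
    simpa [Ne.symm hpq] using this.symm

lemma Cl.add {γ : Type*} {g : n → γ} {M N : Matrix n n ℂ} (hM : Cl g M) (hN : Cl g N) :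
    Cl g (M + N) := fun p q h => by simp [hM p q h, hN p q h]

lemma Cl.sub {γ : Type*} {g : n → γ} {M N : Matrix n n ℂ} (hM : Cl g M) (hN : Cl g N) :
    Cl g (M - N) := fun p q h => by simp [hM p q h, hN p q h]

lemma Cl.smul {γ : Type*} {g : n → γ} {M : Matrix n n ℂ} (hM : Cl g M) (c : ℝ) :
    Cl g (c • M) := fun p q h => by simp [hM p q h]

lemma Cl.cfc {γ : Type*} [DecidableEq γ] {g : n → γ} {M : Matrix n n ℂ} (hM : Cl g M)
    (hh : M.IsHermitian) (f : ℝ → ℝ) : Cl g (cfc f M) := by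
  rw [cl_iff] at *
  intro x
  exact hh.isSelfAdjoint.commute_cfc (hM x) f

lemma mpow_sq {M : Matrix n n ℂ} (hM : M.IsHermitian) :
    mpow (Mᴴ * M) (1/2) = cfc (fun x : ℝ => |x|) M := by
  have e : Mᴴ * M = cfc (fun x : ℝ => x * x) M := by
    rw [cfc_mul _ _ _ (contSpec _ _) (contSpec _ _), cfc_id' ℝ M hM.isSelfAdjoint, hM.eq]
  rw [mpow_eq_cfc (Matrix.isHermitian_conjTranspose_mul_self M), e,
    ← cfc_comp' _ _ _ ?_ (contSpec _ _) hM.isSelfAdjoint]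
  · congr 1; ext x
    rw [← Real.sqrt_eq_rpow, Real.sqrt_mul_self_eq_abs]
  · intro x hx
    exact (Real.continuous_rpow_const (by norm_num)).continuousWithinAt

lemma cfc_psd {M : Matrix n n ℂ} (f : ℝ → ℝ) (hf : ∀ x, 0 ≤ f x) :
    (cfc f M).PosSemidef :=
  Matrix.nonneg_iff_posSemidef.mp (cfc_nonneg (fun x _ => hf x))

lemma complement {γ : Type*} [DecidableEq γ] {g : n → γ} {ρ σ : Matrix n n ℂ}
    (hρ : IsDensity ρ) (hσ : IsDensity σ) (cρ : Cl g ρ) (cσ : Cl g σ) {ε : ℝ}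
    (hd : (1/2) * traceNorm (ρ - σ) ≤ ε) :
    ∃ N N' : Matrix n n ℂ, N.PosSemidef ∧ N'.PosSemidef ∧ Cl g N ∧ Cl g N' ∧
      N.trace.re = ε ∧ N'.trace.re = ε ∧ ρ + N = σ + N' := by
  set M := ρ - σ with hM
  have hMh : M.IsHermitian := hρ.1.isHermitian.sub hσ.1.isHermitian
  have cM : Cl g M := cρ.sub cσ
  set P := cfc (fun x : ℝ => max x 0) M with hP
  set Q := cfc (fun x : ℝ => max (-x) 0) M with hQ
  have hPQ : P - Q = M := by
    rw [hP, hQ, ← cfc_sub _ _ _ (contSpec _ _) (contSpec _ _)]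
    nth_rw 2 [← cfc_id' ℝ M hMh.isSelfAdjoint]
    congr 1; ext x
    rcases le_total x 0 with h | h <;> simp [h]
  have hPQ' : P + Q = mpow (Mᴴ * M) (1/2) := by
    rw [mpow_sq hMh, hP, hQ, ← cfc_add _ _ _ (contSpec _ _) (contSpec _ _)]
    congr 1; ext x
    rcases le_total x 0 with h | h <;> simp [h, abs_of_nonneg, abs_of_nonpos]
  have t0 : M.trace.re = 0 := by rw [hM, Matrix.trace_sub, hρ.2, hσ.2]; simp
  have t1 : P.trace.re - Q.trace.re = 0 := by
    rw [← t0, ← hPQ, Matrix.trace_sub, Complex.sub_re]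
  have t2 : P.trace.re + Q.trace.re = traceNorm M := by
    unfold traceNorm
    rw [← hPQ', Matrix.trace_add, Complex.add_re]
  have hP0 : P.PosSemidef := cfc_psd _ (fun x => le_max_right _ _)
  have hQ0 : Q.PosSemidef := cfc_psd _ (fun x => le_max_right _ _)
  have hδ : 0 ≤ ε - P.trace.re := by linarith
  have hR := mpow_smul_psd hρ.1 hδ
  have tR : ((ε - P.trace.re) • ρ).trace.re = ε - P.trace.re := by
    rw [Matrix.trace_smul, Complex.smul_re, hρ.2]; simp
  refine ⟨Q + (ε - P.trace.re) • ρ, P + (ε - P.trace.re) • ρ, hQ0.add hR, hP0.add hR,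
    (cM.cfc hMh _).add (cρ.smul _), (cM.cfc hMh _).add (cρ.smul _), ?_, ?_, ?_⟩
  · rw [Matrix.trace_add, Complex.add_re, tR]; linarith
  · rw [Matrix.trace_add, Complex.add_re, tR]; linarith
  · have : ρ + Q = σ + P := by
      have := hPQ
      rw [hM] at this
      rw [← sub_eq_zero] at this ⊢
      rw [← neg_eq_zero, ← this]; abel
    rw [← add_assoc, ← add_assoc, this]

end R

section S
variable {a b : Type*} [Fintype a] [DecidableEq a] [Fintype b] [DecidableEq b]

/-- Partial trace over the first factor. -/
def pB (N : Matrix (a × b) (a × b) ℂ) : Matrix b b ℂ := fun i j => ∑ x, N (x, i) (x, j)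

lemma pB_eq (N : Matrix (a × b) (a × b) ℂ) :
    pB N = ∑ x, N.submatrix (fun i : b => (x, i)) (fun i : b => (x, i)) := by
  ext i j
  simp [pB, Matrix.sum_apply]

lemma pB_psd {N : Matrix (a × b) (a × b) ℂ} (hN : N.PosSemidef) : (pB N).PosSemidef := by
  rw [pB_eq]
  exact Matrix.posSemidef_sum _ (fun x _ => hN.submatrix _)

lemma pB_trace (N : Matrix (a × b) (a × b) ℂ) : (pB N).trace = N.trace := by
  simp only [Matrix.trace, pB, Matrix.diag_apply, Fintype.sum_prod_type]
  rw [Finset.sum_comm]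

lemma le_trace_one {n : Type*} [Fintype n] [DecidableEq n] {M : Matrix n n ℂ}
    (hM : M.PosSemidef) : (M.trace • (1 : Matrix n n ℂ) - M).PosSemidef := by
  have h1 : M ≤ algebraMap ℝ (Matrix n n ℂ) M.trace.re := by
    apply le_algebraMap_of_spectrum_le _ hM.isHermitian.isSelfAdjoint
    intro x hx
    rw [hM.isHermitian.spectrum_real_eq_range_eigenvalues] at hx
    obtain ⟨i, rfl⟩ := hx
    rw [hM.isHermitian.trace_eq_sum_eigenvalues]
    simp only [Complex.coe_algebraMap, Complex.re_sum, Complex.ofReal_re]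
    exact Finset.single_le_sum (f := hM.isHermitian.eigenvalues)
      (fun j _ => hM.eigenvalues_nonneg j) (Finset.mem_univ i)
  have h2 : algebraMap ℝ (Matrix n n ℂ) M.trace.re = M.trace • (1 : Matrix n n ℂ) := by
    have h3 : ((M.trace.re : ℝ) : ℂ) = M.trace := by
      have := (Complex.le_def.mp hM.trace_nonneg).2
      apply Complex.ext <;> simp_all
    rw [Algebra.algebraMap_eq_smul_one]
    nth_rw 2 [← h3]
    ext i j
    simp
  rw [h2] at h1
  exact Matrix.le_iff.mp h1

lemma classA_le {N : Matrix (a × b) (a × b) ℂ} (hN : N.PosSemidef) (hc : ClassicalA N) :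
    N ≤ (1 : Matrix a a ℂ) ⊗ₖ pB N := by
  rw [Matrix.le_iff]
  have e : (1 : Matrix a a ℂ) ⊗ₖ pB N - N = ∑ x, (Matrix.diagonal (fun y => if y = x then (0:ℂ) else 1)) ⊗ₖ
      (N.submatrix (fun i : b => (x, i)) (fun i : b => (x, i))) := by
    ext ⟨x, i⟩ ⟨y, j⟩
    simp only [Matrix.sub_apply, Matrix.kroneckerMap_apply, Matrix.sum_apply, pB,
      Matrix.submatrix_apply]
    by_cases hxy : x = y
    · subst hxy
      simp only [Matrix.one_apply_eq, one_mul, Matrix.diagonal_apply_eq, ite_mul, zero_mul]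
      have e1 : N (x, i) (x, j) = ∑ z, if x = z then N (z, i) (z, j) else 0 := by simp
      rw [sub_eq_iff_eq_add, e1, ← Finset.sum_add_distrib]
      apply Finset.sum_congr rfl
      intro z _
      split_ifs <;> simp
    · simp [hxy, hc (x, i) (y, j) hxy]
  rw [e]
  refine Matrix.posSemidef_sum _ (fun x _ => Matrix.PosSemidef.kronecker ?_ (hN.submatrix _))
  rw [Matrix.posSemidef_diagonal_iff]
  intro y; split_ifs <;> simp

lemma classB_le {N : Matrix (a × b) (a × b) ℂ} (hN : N.PosSemidef) (hc : ClassicalB N) :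
    N ≤ (1 : Matrix a a ℂ) ⊗ₖ pB N := by
  rw [Matrix.le_iff]
  have e : (1 : Matrix a a ℂ) ⊗ₖ pB N - N = ∑ y,
      ((N.submatrix (fun i : a => (i, y)) (fun i : a => (i, y))).trace • (1 : Matrix a a ℂ) -
        (N.submatrix (fun i : a => (i, y)) (fun i : a => (i, y)))) ⊗ₖ
      (Matrix.diagonal (fun z => if z = y then (1:ℂ) else 0)) := by
    ext ⟨x, i⟩ ⟨y, j⟩
    simp only [Matrix.sub_apply, Matrix.kroneckerMap_apply, Matrix.sum_apply, pB,
      Matrix.submatrix_apply, Matrix.smul_apply, Matrix.trace, Matrix.diag_apply, smul_eq_mul]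
    by_cases hij : i = j
    · subst hij
      simp only [Matrix.diagonal_apply_eq, mul_ite, mul_one, mul_zero, Finset.sum_ite_eq,
        Finset.mem_univ, if_true]
      rw [mul_comm]
    · simp [hij, hc (x, i) (y, j) hij, fun z => hc (z, i) (z, j) hij]
  rw [e]
  refine Matrix.posSemidef_sum _ (fun x _ => Matrix.PosSemidef.kronecker
    (le_trace_one (hN.submatrix _)) ?_)
  rw [Matrix.posSemidef_diagonal_iff]
  intro y; split_ifs <;> simp

lemma sandTr_eq {η : Matrix b b ℂ} (hη : η.PosSemidef) (α : ℝ) (ρ : Matrix (a × b) (a × b) ℂ) :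
    sandTr α ρ η = qf α ρ ((1 : Matrix a a ℂ) ⊗ₖ η) := by
  unfold sandTr qf
  rw [one_kron_mpow hη]

lemma kron_tr (η : Matrix b b ℂ) :
    ((1 : Matrix a a ℂ) ⊗ₖ η).trace.re = Fintype.card a * η.trace.re := by
  rw [Matrix.trace_kronecker, Matrix.trace_one]
  simp

lemma kron_psd {η : Matrix b b ℂ} (hη : η.PosSemidef) : ((1 : Matrix a a ℂ) ⊗ₖ η).PosSemidef :=
  Matrix.PosSemidef.one.kronecker hη

lemma sandTr_nonneg {η : Matrix b b ℂ} {ρ : Matrix (a × b) (a × b) ℂ} (hη : η.PosSemidef)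
    (hρ : ρ.PosSemidef) (α : ℝ) : 0 ≤ sandTr α ρ η := by
  rw [sandTr_eq hη]; exact q_nonneg (kron_psd hη) hρ α

lemma sandTr_upper {η : Matrix b b ℂ} {ρ : Matrix (a × b) (a × b) ℂ} (hη : IsDensity η)
    (hρ : IsDensity ρ) {α : ℝ} (h0 : 1/2 ≤ α) (h1 : α < 1) :
    sandTr α ρ η ≤ (Fintype.card a : ℝ) ^ (1 - α) := by
  rw [sandTr_eq hη.1]
  have := q_upper (kron_psd (a := a) hη.1) hρ.1 h0 h1
  rw [kron_tr, hη.2, hρ.2] at this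
  simpa using this

lemma card_pos {ρ : Matrix (a × b) (a × b) ℂ} (hρ : IsDensity ρ) : (1:ℝ) ≤ Fintype.card a := by
  by_contra h
  have : Fintype.card a = 0 := by
    by_contra h'
    exact h (by exact_mod_cast Nat.one_le_iff_ne_zero.mpr h')
  have := Fintype.card_eq_zero_iff.mp this
  have h2 := hρ.2
  simp [Matrix.trace] at h2

lemma term_upper {η : Matrix b b ℂ} {ρ : Matrix (a × b) (a × b) ℂ} (hη : IsDensity η)
    (hρ : IsDensity ρ) {α : ℝ} (h0 : 1/2 ≤ α) (h1 : α < 1) :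
    (1/(1-α)) * Real.logb 2 (sandTr α ρ η) ≤
      (1/(1-α)) * Real.logb 2 ((Fintype.card a : ℝ) ^ (1 - α)) := by
  have h1' : 0 < 1 - α := by linarith
  apply mul_le_mul_of_nonneg_left _ (by positivity)
  have hd : (1:ℝ) ≤ (Fintype.card a : ℝ) ^ (1 - α) := Real.one_le_rpow (card_pos hρ) h1'.le
  rcases (sandTr_nonneg hη.1 hρ.1 α).eq_or_lt with h | h
  · rw [← h, Real.logb_zero]
    exact Real.logb_nonneg one_lt_two hd
  · exact Real.logb_le_logb_of_le one_lt_two h (sandTr_upper hη hρ h0 h1)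

lemma pB_density {ρ : Matrix (a × b) (a × b) ℂ} (hρ : IsDensity ρ) : IsDensity (pB ρ) :=
  ⟨pB_psd hρ.1, by rw [pB_trace, hρ.2]⟩

lemma Hcond_bdd {ρ : Matrix (a × b) (a × b) ℂ} (hρ : IsDensity ρ) {α : ℝ} (h0 : 1/2 ≤ α)
    (h1 : α < 1) : BddAbove (Set.range fun η : {η : Matrix b b ℂ // IsDensity η} =>
      (1/(1-α)) * Real.logb 2 (sandTr α ρ η)) :=
  ⟨_, by rintro _ ⟨η, rfl⟩; exact term_upper η.2 hρ h0 h1⟩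

lemma term_le_Hcond {η : Matrix b b ℂ} {ρ : Matrix (a × b) (a × b) ℂ} (hη : IsDensity η)
    (hρ : IsDensity ρ) {α : ℝ} (h0 : 1/2 ≤ α) (h1 : α < 1) :
    (1/(1-α)) * Real.logb 2 (sandTr α ρ η) ≤ Hcond α ρ :=
  le_ciSup (Hcond_bdd hρ h0 h1) (⟨η, hη⟩ : {η : Matrix b b ℂ // IsDensity η})

lemma one_le_sandTr {ρ : Matrix (a × b) (a × b) ℂ} (hρ : IsDensity ρ)
    (hle : ρ ≤ (1 : Matrix a a ℂ) ⊗ₖ pB ρ) {α : ℝ} (h0 : 1/2 ≤ α) (h1 : α < 1) :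
    1 ≤ sandTr α ρ (pB ρ) := by
  rw [sandTr_eq (pB_psd hρ.1)]
  have := q_lower hρ.1 hle h0 h1
  rwa [hρ.2] at this

lemma S_props {ρ : Matrix (a × b) (a × b) ℂ} (hρ : IsDensity ρ)
    (hle : ρ ≤ (1 : Matrix a a ℂ) ⊗ₖ pB ρ) {α : ℝ} (h0 : 1/2 ≤ α) (h1 : α < 1) :
    ∃ S : ℝ, 1 ≤ S ∧ S ≤ (Fintype.card a : ℝ) ^ (1 - α) ∧
      Real.logb 2 S = (1 - α) * Hcond α ρ ∧
      ∀ η : Matrix b b ℂ, η.PosSemidef → 0 < η.trace.re →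
        qf α ρ ((1 : Matrix a a ℂ) ⊗ₖ η) ≤ S * η.trace.re ^ (1 - α) := by
  have h1' : 0 < 1 - α := by linarith
  have hd := card_pos hρ
  have hH0 : 0 ≤ Hcond α ρ := by
    refine le_trans ?_ (term_le_Hcond (pB_density hρ) hρ h0 h1)
    exact mul_nonneg (by positivity)
      (Real.logb_nonneg one_lt_two (one_le_sandTr hρ hle h0 h1))
  have : Nonempty {η : Matrix b b ℂ // IsDensity η} := ⟨⟨_, pB_density hρ⟩⟩
  have hH1 : Hcond α ρ ≤ (1/(1-α)) * Real.logb 2 ((Fintype.card a : ℝ) ^ (1 - α)) :=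
    ciSup_le (fun η => term_upper η.2 hρ h0 h1)
  refine ⟨2 ^ ((1 - α) * Hcond α ρ), ?_, ?_, ?_, ?_⟩
  · exact Real.one_le_rpow one_le_two (by positivity)
  · rw [← Real.le_logb_iff_rpow_le one_lt_two (by positivity)]
    have := mul_le_mul_of_nonneg_left hH1 h1'.le
    rwa [← mul_assoc, mul_one_div_cancel h1'.ne', one_mul] at this
  · exact Real.logb_rpow (by norm_num) (by norm_num)
  · intro η hη ht
    set t := η.trace.re with htdef
    have htc : η.trace = (t : ℂ) := by
      have := (Complex.le_def.mp hη.trace_nonneg).2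
      apply Complex.ext <;> simp_all
    have hden : IsDensity (t⁻¹ • η) := by
      refine ⟨mpow_smul_psd hη (by positivity), ?_⟩
      rw [Matrix.trace_smul, htc, Complex.real_smul]
      push_cast
      exact inv_mul_cancel₀ (by exact_mod_cast ht.ne')
    have e : (1 : Matrix a a ℂ) ⊗ₖ η = t • ((1 : Matrix a a ℂ) ⊗ₖ (t⁻¹ • η)) := by
      rw [← Matrix.kronecker_smul, smul_smul, mul_inv_cancel₀ ht.ne', one_smul]
    rw [e, q_smul_A (kron_psd hden.1) hρ.1 ht.le (by linarith), mul_comm]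
    apply mul_le_mul_of_nonneg_right _ (by positivity)
    rw [← sandTr_eq hden.1]
    rcases (sandTr_nonneg hden.1 hρ.1 α).eq_or_lt with h | h
    · rw [← h]; positivity
    · rw [← Real.logb_le_iff_le_rpow one_lt_two h]
      have := mul_le_mul_of_nonneg_left (term_le_Hcond hden hρ h0 h1) h1'.le
      rwa [← mul_assoc, mul_one_div_cancel h1'.ne', one_mul] at this

lemma step {ρ σ N N' : Matrix (a × b) (a × b) ℂ} {η : Matrix b b ℂ} (hρ : IsDensity ρ)
    (hσ : IsDensity σ) (hη : IsDensity η) (hN : N.PosSemidef) (hN' : N'.PosSemidef) {ε : ℝ}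
    (hε : 0 ≤ ε) (tN : N.trace.re = ε) (tN' : N'.trace.re = ε) (hsum : ρ + N = σ + N')
    (hle : N' ≤ (1 : Matrix a a ℂ) ⊗ₖ pB N') {α : ℝ} (h0 : 1/2 ≤ α) (h1 : α < 1) {S : ℝ}
    (hS : ∀ η : Matrix b b ℂ, η.PosSemidef → 0 < η.trace.re →
        qf α ρ ((1 : Matrix a a ℂ) ⊗ₖ η) ≤ S * η.trace.re ^ (1 - α)) :
    sandTr α σ η + ε ≤ S * (1 + ε) ^ (1 - α) + ε ^ α * (Fintype.card a * (1 + ε)) ^ (1 - α) := by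
  have hα : 0 < α := by linarith
  have h1' : 0 < 1 - α := by linarith
  rw [sandTr_eq hη.1]
  set I := (1 : Matrix (a × b) (a × b) ℂ) with hI
  have key : ∀ δ : ℝ, 0 < δ → qf α σ ((1 : Matrix a a ℂ) ⊗ₖ η) + ε ≤
      S * (1 + ε + 2 * δ * Fintype.card b) ^ (1 - α) +
      ε ^ α * (Fintype.card a * (1 + ε + 2 * δ * Fintype.card b)) ^ (1 - α) +
      (2 * δ * Fintype.card (a × b)) ^ α *
        (Fintype.card a * (1 + ε + 2 * δ * Fintype.card b)) ^ (1 - α) := by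
    intro δ hδ
    have hA₁ := kron_psd (a := a) hη.1
    have hA₂ := kron_psd (a := a) (pB_psd hN')
    have s1 : qf α σ ((1 : Matrix a a ℂ) ⊗ₖ η) ≤
        qf α (σ + δ • I) ((1 : Matrix a a ℂ) ⊗ₖ η + δ • I) :=
      (q_mono_A hA₁ hσ.1 (le_add_eps _ hδ.le) h0 h1).trans
        (q_mono_X (psd_add_eps hA₁ hδ).posSemidef hσ.1 (le_add_eps _ hδ.le) hα h1)
    have s2 : ε ≤ qf α (N' + δ • I) ((1 : Matrix a a ℂ) ⊗ₖ pB N' + δ • I) := by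
      have := q_lower hN' hle h0 h1
      rw [tN'] at this
      exact (this.trans (q_mono_A hA₂ hN' (le_add_eps _ hδ.le) h0 h1)).trans
        (q_mono_X (psd_add_eps hA₂ hδ).posSemidef hN' (le_add_eps _ hδ.le) hα h1)
    have s3 := q_superadd (psd_add_eps hA₁ hδ) (psd_add_eps hA₂ hδ) (psd_add_eps hσ.1 hδ)
      (psd_add_eps hN' hδ) h0 h1
    set T := η + pB N' + (2 * δ) • (1 : Matrix b b ℂ) with hT
    have hTp : T.PosSemidef := (psd_add_eps (hη.1.add (pB_psd hN')) (by positivity)).posSemidef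
    have tT : T.trace.re = 1 + ε + 2 * δ * Fintype.card b := by
      rw [hT, tr_add_eps, Matrix.trace_add, hη.2, pB_trace, Complex.add_re, tN']; simp
    have e1 : (1 : Matrix a a ℂ) ⊗ₖ η + δ • I + ((1 : Matrix a a ℂ) ⊗ₖ pB N' + δ • I) =
        (1 : Matrix a a ℂ) ⊗ₖ T := by
      rw [hT, Matrix.kronecker_add, Matrix.kronecker_add, Matrix.kronecker_smul,
        Matrix.one_kronecker_one, two_mul, add_smul]
      abel
    have e2 : σ + δ • I + (N' + δ • I) = ρ + N + (2 * δ) • I := by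
      rw [hsum, two_mul, add_smul]; abel
    rw [← hI, e1, e2] at s3
    have hIp : ((2 * δ) • I).PosSemidef := mpow_smul_psd Matrix.PosSemidef.one (by positivity)
    have hK := kron_psd (a := a) hTp
    have u1 := q_subadd hK (hρ.1.add hN) hIp hα h1
    have u2 := q_subadd hK hρ.1 hN hα h1
    have u3 := hS T hTp (by rw [tT]; positivity)
    have u4 := q_upper hK hN h0 h1
    have u5 := q_upper hK hIp h0 h1
    have tI : ((2 * δ) • I).trace.re = 2 * δ * Fintype.card (a × b) := by
      rw [Matrix.trace_smul, Complex.smul_re, hI, Matrix.trace_one]; simp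
    rw [kron_tr, tT, tN] at u4
    rw [kron_tr, tT, tI] at u5
    rw [tT] at u3
    linarith
  have := lim0 (f := fun δ => S * (1 + ε + 2 * δ * Fintype.card b) ^ (1 - α) +
      ε ^ α * (Fintype.card a * (1 + ε + 2 * δ * Fintype.card b)) ^ (1 - α) +
      (2 * δ * Fintype.card (a × b)) ^ α *
        (Fintype.card a * (1 + ε + 2 * δ * Fintype.card b)) ^ (1 - α)) (by
      have c1 : Continuous fun δ : ℝ => (1 + ε + 2 * δ * Fintype.card b : ℝ) ^ (1 - α) :=
        Continuous.rpow_const (by fun_prop) (fun _ => Or.inr h1'.le)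
      have c2 : Continuous fun δ : ℝ =>
          (Fintype.card a * (1 + ε + 2 * δ * Fintype.card b) : ℝ) ^ (1 - α) :=
        Continuous.rpow_const (by fun_prop) (fun _ => Or.inr h1'.le)
      have c3 : Continuous fun δ : ℝ => (2 * δ * Fintype.card (a × b) : ℝ) ^ α :=
        Continuous.rpow_const (by fun_prop) (fun _ => Or.inr hα.le)
      exact ((continuous_const.mul c1).add (continuous_const.mul c2)).add (c3.mul c2)) key
  simpa [Real.zero_rpow hα.ne'] using this

lemma one_dir {ρ σ N N' : Matrix (a × b) (a × b) ℂ} (hρ : IsDensity ρ)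
    (hσ : IsDensity σ) (hN : N.PosSemidef) (hN' : N'.PosSemidef) {ε : ℝ}
    (hε : 0 ≤ ε) (tN : N.trace.re = ε) (tN' : N'.trace.re = ε) (hsum : ρ + N = σ + N')
    (lρ : ρ ≤ (1 : Matrix a a ℂ) ⊗ₖ pB ρ) (lσ : σ ≤ (1 : Matrix a a ℂ) ⊗ₖ pB σ)
    (hle : N' ≤ (1 : Matrix a a ℂ) ⊗ₖ pB N') {α : ℝ} (h0 : 1/2 ≤ α) (h1 : α < 1) :
    Hcond α σ ≤ Hcond α ρ + (Real.logb 2 (1 + ε) +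
        (1/(1-α)) * Real.logb 2
          (1 + ε ^ α * (Fintype.card a : ℝ) ^ (1-α) -
            ε / ((Fintype.card a : ℝ) * (1+ε)) ^ (1-α))) := by
  have h1' : 0 < 1 - α := by linarith
  obtain ⟨S, hS1, hS2, hSl, hS⟩ := S_props hρ lρ h0 h1
  set d : ℝ := ((Fintype.card a : ℕ) : ℝ) with hd
  have hd1 : 1 ≤ d := card_pos hρ
  have hd0 : 0 < d := by linarith
  set B := 1 + ε ^ α * d ^ (1-α) - ε / (d * (1+ε)) ^ (1-α) with hB
  have hbound : ∀ η : Matrix b b ℂ, IsDensity η →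
      sandTr α σ η ≤ S * (1 + ε) ^ (1 - α) * B := by
    intro η hη
    have h := step hρ hσ hη hN hN' hε tN tN' hsum hle h0 h1 hS
    rw [← hd, Real.mul_rpow hd0.le (by positivity)] at h
    set u := (1 + ε) ^ (1 - α) with hu
    set v := d ^ (1 - α) with hv
    have hu0 : 0 < u := by positivity
    have hv0 : 0 < v := by positivity
    have e : S * u * B = S * u + S * (ε ^ α * (v * u)) - ε * (S / v) := by
      rw [hB, Real.mul_rpow hd0.le (by positivity), ← hu, ← hv]
      field_simp
    rw [e]
    have k1 : ε * (S / v) ≤ ε * 1 :=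
      mul_le_mul_of_nonneg_left ((div_le_one hv0).mpr hS2) hε
    have k2 : 1 * (ε ^ α * (v * u)) ≤ S * (ε ^ α * (v * u)) :=
      mul_le_mul_of_nonneg_right hS1 (by positivity)
    linarith
  have hpos : ∀ η : Matrix b b ℂ, IsDensity η → 0 < sandTr α σ η →
      (1/(1-α)) * Real.logb 2 (sandTr α σ η) ≤
        Hcond α ρ + (Real.logb 2 (1 + ε) + (1/(1-α)) * Real.logb 2 B) := by
    intro η hη hq
    have h := hbound η hη
    have hSu : 0 < S * (1 + ε) ^ (1 - α) := by positivity
    have hB0 : 0 < B := by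
      by_contra hneg
      have := mul_nonpos_of_nonneg_of_nonpos hSu.le (not_lt.mp hneg)
      linarith
    have h2 := Real.logb_le_logb_of_le one_lt_two hq h
    rw [Real.logb_mul hSu.ne' hB0.ne', Real.logb_mul (by positivity) (by positivity), hSl,
      Real.logb_rpow_eq_mul_logb_of_pos (by positivity)] at h2
    have h3 := mul_le_mul_of_nonneg_left h2 (show 0 ≤ 1/(1-α) by positivity)
    refine h3.trans (le_of_eq ?_)
    field_simp
    ring
  have : Nonempty {η : Matrix b b ℂ // IsDensity η} := ⟨⟨_, pB_density hρ⟩⟩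
  refine ciSup_le (fun η => ?_)
  rcases (sandTr_nonneg η.2.1 hσ.1 α).eq_or_lt with h | h
  · have hone := one_le_sandTr hσ lσ h0 h1
    have := hpos _ (pB_density hσ) (by linarith)
    have h2 : 0 ≤ (1/(1-α)) * Real.logb 2 (sandTr α σ (pB σ)) :=
      mul_nonneg (by positivity) (Real.logb_nonneg one_lt_two hone)
    rw [← h, Real.logb_zero, mul_zero]
    linarith
  · exact hpos _ η.2 h

end S

/-- Strengthened continuity bound when `A` is classical for both states, or `B` is
classical for both states. -/
theorem Hcond_uniform_continuity_classical {dA dB : ℕ}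
    (α : ℝ) (hα : α ∈ Set.Ico (1/2 : ℝ) 1)
    (ε : ℝ) (hε : ε ∈ Set.Icc (0:ℝ) 1)
    (ρ σ : Matrix (Fin dA × Fin dB) (Fin dA × Fin dB) ℂ)
    (hρ : IsDensity ρ) (hσ : IsDensity σ)
    (hcl : (ClassicalA ρ ∧ ClassicalA σ) ∨ (ClassicalB ρ ∧ ClassicalB σ))
    (hdist : (1/2) * traceNorm (ρ - σ) ≤ ε) :
    |Hcond α σ - Hcond α ρ| ≤
      Real.logb 2 (1 + ε) +
        (1/(1-α)) * Real.logb 2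
          (1 + ε ^ α * (dA : ℝ) ^ (1-α) - ε / ((dA : ℝ) * (1+ε)) ^ (1-α)) := by
  have hα0 := hα.1
  have hα1 := hα.2
  have main : (ρ ≤ (1 : Matrix (Fin dA) (Fin dA) ℂ) ⊗ₖ pB ρ) ∧
      (σ ≤ (1 : Matrix (Fin dA) (Fin dA) ℂ) ⊗ₖ pB σ) ∧
      ∃ N N' : Matrix (Fin dA × Fin dB) (Fin dA × Fin dB) ℂ, N.PosSemidef ∧ N'.PosSemidef ∧
        (N ≤ (1 : Matrix (Fin dA) (Fin dA) ℂ) ⊗ₖ pB N) ∧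
        (N' ≤ (1 : Matrix (Fin dA) (Fin dA) ℂ) ⊗ₖ pB N') ∧
        N.trace.re = ε ∧ N'.trace.re = ε ∧ ρ + N = σ + N' := by
    rcases hcl with ⟨c1, c2⟩ | ⟨c1, c2⟩
    · obtain ⟨N, N', h1, h2, h3, h4, h5, h6, h7⟩ :=
        complement (g := Prod.fst) hρ hσ c1 c2 hdist
      exact ⟨classA_le hρ.1 c1, classA_le hσ.1 c2, N, N', h1, h2, classA_le h1 h3,
        classA_le h2 h4, h5, h6, h7⟩
    · obtain ⟨N, N', h1, h2, h3, h4, h5, h6, h7⟩ :=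
        complement (g := Prod.snd) hρ hσ c1 c2 hdist
      exact ⟨classB_le hρ.1 c1, classB_le hσ.1 c2, N, N', h1, h2, classB_le h1 h3,
        classB_le h2 h4, h5, h6, h7⟩
  obtain ⟨lρ, lσ, N, N', h1, h2, h3, h4, h5, h6, h7⟩ := main
  have d1 := one_dir hρ hσ h1 h2 hε.1 h5 h6 h7 lρ lσ h4 hα0 hα1
  have d2 := one_dir hσ hρ h2 h1 hε.1 h6 h5 h7.symm lσ lρ h3 hα0 hα1
  rw [Fintype.card_fin] at d1 d2
  rw [abs_sub_le_iff]
  constructor <;> linarith
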